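/- arXiv:2412.03444 — 2 statements merged into one kernel-verified Lean document; each statement's English description precedes it below -/
import Mathlib

section
/- Let ρ and σ be positive definite d×d density matrices, and let (α,z) satisfy either 1 < α ≤ 2 with α/2 ≤ z ≤ α, or 2 ≤ α < ∞ with α−1 ≤ z ≤ α. Then the set { F_{α,z}(ρ, UσU*) : U a d×d unitary matrix } is exactly the closed interval [F_α^C(λ↓(ρ), λ↓(σ)), F_α^C(λ↓(ρ), λ↑(σ))]. -/
open Matrix
open scoped ComplexOrder

/-- Real power of a (Hermitian) matrix via functional calculus on eigenvalues,
with `(0:ℝ) ^ t = 0` for `t ≠ 0`. Returns `0` on non-Hermitian input. -/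
noncomputable def mpow {d : ℕ} (A : Matrix (Fin d) (Fin d) ℂ) (t : ℝ) :
    Matrix (Fin d) (Fin d) ℂ :=
  if hA : A.IsHermitian then
    (hA.eigenvectorUnitary : Matrix (Fin d) (Fin d) ℂ) *
      Matrix.diagonal (fun i => ((hA.eigenvalues i ^ t : ℝ) : ℂ)) *
      (star (hA.eigenvectorUnitary : Matrix (Fin d) (Fin d) ℂ))
  else 0

/-- The quantum α-z-fidelity
`F_{α,z}(ρ,σ) = (Tr[(σ^{(1-α)/(2z)} ρ^{α/z} σ^{(1-α)/(2z)})^z])^{1/α}`. -/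
noncomputable def Faz {d : ℕ} (ρ σ : Matrix (Fin d) (Fin d) ℂ) (α z : ℝ) : ℝ :=
  ((mpow (mpow σ ((1 - α) / (2 * z)) * mpow ρ (α / z) * mpow σ ((1 - α) / (2 * z))) z).trace.re)
    ^ (1 / α)

/-- The classical α-fidelity `F_α^C(p,q) = (Σ_i p_i^α q_i^{1-α})^{1/α}`. -/
noncomputable def FazC {d : ℕ} (p q : Fin d → ℝ) (α : ℝ) : ℝ :=
  (∑ i, p i ^ α * q i ^ (1 - α)) ^ (1 / α)

/-- The vector `p` rearranged in increasing order. -/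
noncomputable def sortUp {d : ℕ} (p : Fin d → ℝ) : Fin d → ℝ :=
  p ∘ Tuple.sort p

/-- The vector `p` rearranged in decreasing order. -/
noncomputable def sortDown {d : ℕ} (p : Fin d → ℝ) : Fin d → ℝ :=
  fun i => sortUp p i.rev

/-- `λ↑(A)`: the eigenvalues of a Hermitian matrix in increasing order. -/
noncomputable def eigUp {d : ℕ} {A : Matrix (Fin d) (Fin d) ℂ} (hA : A.IsHermitian) :
    Fin d → ℝ := sortUp hA.eigenvalues

/-- `λ↓(A)`: the eigenvalues of a Hermitian matrix in decreasing order. -/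
noncomputable def eigDown {d : ℕ} {A : Matrix (Fin d) (Fin d) ℂ} (hA : A.IsHermitian) :
    Fin d → ℝ := sortDown hA.eigenvalues


namespace AZ

/-- `U diag(a) U*`. -/
noncomputable def dg {d : ℕ} (U : Matrix (Fin d) (Fin d) ℂ) (a : Fin d → ℝ) :
    Matrix (Fin d) (Fin d) ℂ :=
  U * Matrix.diagonal (fun i => (a i : ℂ)) * star U

abbrev UG (d : ℕ) := Matrix.unitaryGroup (Fin d) ℂ

variable {d : ℕ}

lemma ug_left {U : Matrix (Fin d) (Fin d) ℂ} (hU : U ∈ UG d) : star U * U = 1 :=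
  Matrix.mem_unitaryGroup_iff'.1 hU

lemma ug_right {U : Matrix (Fin d) (Fin d) ℂ} (hU : U ∈ UG d) : U * star U = 1 :=
  Matrix.mem_unitaryGroup_iff.1 hU

lemma ug_star {U : Matrix (Fin d) (Fin d) ℂ} (hU : U ∈ UG d) : star U ∈ UG d :=
  Matrix.mem_unitaryGroup_iff.2 (by rw [star_star]; exact ug_left hU)

lemma dg_conj (V U : Matrix (Fin d) (Fin d) ℂ) (a : Fin d → ℝ) :
    V * dg U a * star V = dg (V * U) a := by
  simp [dg, star_mul, mul_assoc]

lemma dg_mul {U : Matrix (Fin d) (Fin d) ℂ} (hU : U ∈ UG d) (a b : Fin d → ℝ) :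
    dg U a * dg U b = dg U (fun i => a i * b i) := by
  have h := ug_left hU
  have h1 : dg U a * dg U b = U * Matrix.diagonal (fun i => (a i : ℂ)) * (star U * U) *
      Matrix.diagonal (fun i => (b i : ℂ)) * star U := by
    simp only [dg, mul_assoc]
  rw [h1, h, mul_one, mul_assoc U, Matrix.diagonal_mul_diagonal]
  simp [dg]

lemma dg_one {U : Matrix (Fin d) (Fin d) ℂ} (hU : U ∈ UG d) :
    dg U (fun _ => 1) = 1 := by
  have h := ug_right hU
  simp [dg, h]

lemma dg_herm (U : Matrix (Fin d) (Fin d) ℂ) (a : Fin d → ℝ) : (dg U a).IsHermitian := by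
  unfold Matrix.IsHermitian
  rw [← Matrix.star_eq_conjTranspose]
  have : star (Matrix.diagonal (fun i => (a i : ℂ))) = Matrix.diagonal (fun i => (a i : ℂ)) := by
    rw [Matrix.star_eq_conjTranspose, Matrix.diagonal_conjTranspose]
    congr 1; ext i; simp
  simp [dg, star_mul, this, mul_assoc]

lemma exists_dg {M : Matrix (Fin d) (Fin d) ℂ} (hM : M.IsHermitian) :
    M = dg (hM.eigenvectorUnitary : Matrix (Fin d) (Fin d) ℂ) hM.eigenvalues := by
  have := hM.spectral_theorem
  rw [Unitary.conjStarAlgAut_apply] at this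
  exact this

lemma dg_trace {U : Matrix (Fin d) (Fin d) ℂ} (hU : U ∈ UG d) (a : Fin d → ℝ) :
    (dg U a).trace = ((∑ i, a i : ℝ) : ℂ) := by
  rw [dg, Matrix.trace_mul_comm, ← mul_assoc, ug_left hU, one_mul, Matrix.trace_diagonal]
  push_cast; rfl

lemma intertwine {U V M : Matrix (Fin d) (Fin d) ℂ} (hU : U ∈ UG d) (hV : V ∈ UG d)
    {a b : Fin d → ℝ} (f : ℝ → ℝ) (h : M * dg U a = dg V b * M) :
    M * dg U (fun i => f (a i)) = dg V (fun i => f (b i)) * M := by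
  have hUl := ug_left hU
  have hUr := ug_right hU
  have hVl := ug_left hV
  have hVr := ug_right hV
  have key : ∀ a b : Fin d → ℝ, M * dg U a = dg V b * M ↔
      (star V * M * U) * Matrix.diagonal (fun i => (a i : ℂ)) =
        Matrix.diagonal (fun i => (b i : ℂ)) * (star V * M * U) := by
    intro a b
    constructor
    · intro h
      have h2 : star V * (M * dg U a) * U = star V * (dg V b * M) * U := by rw [h]
      have e1 : star V * (M * dg U a) * U = (star V * M * U) *
        Matrix.diagonal (fun i => (a i : ℂ)) * (star U * U) := by simp only [dg, mul_assoc]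
      have e2 : star V * (dg V b * M) * U = (star V * V) * (Matrix.diagonal (fun i => (b i : ℂ)) *
        (star V * M * U)) := by simp only [dg, mul_assoc]
      rwa [e1, e2, hUl, hVl, one_mul, mul_one] at h2
    · intro h
      have h2 : V * ((star V * M * U) * Matrix.diagonal (fun i => (a i : ℂ))) * star U =
        V * (Matrix.diagonal (fun i => (b i : ℂ)) * (star V * M * U)) * star U := by rw [h]
      have e1 : V * ((star V * M * U) * Matrix.diagonal (fun i => (a i : ℂ))) * star U =
        (V * star V) * (M * dg U a) := by simp only [dg, mul_assoc]
      have e2 : V * (Matrix.diagonal (fun i => (b i : ℂ)) * (star V * M * U)) * star U =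
        dg V b * M * (U * star U) := by simp only [dg, mul_assoc]
      rwa [e1, e2, hUr, hVr, one_mul, mul_one] at h2
  rw [key] at h ⊢
  ext i j
  have hij := congrFun (congrFun h i) j
  rw [Matrix.mul_diagonal, Matrix.diagonal_mul] at hij ⊢
  by_cases hw : (star V * M * U) i j = 0
  · rw [hw]; simp
  · have : (a j : ℂ) = b i := by
      rw [mul_comm] at hij
      exact mul_right_cancel₀ hw hij
    have : a j = b i := by exact_mod_cast this
    rw [this, mul_comm]

lemma dg_fun_congr {U V : Matrix (Fin d) (Fin d) ℂ} (hU : U ∈ UG d) (hV : V ∈ UG d)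
    {a b : Fin d → ℝ} (f : ℝ → ℝ) (h : dg U a = dg V b) :
    dg U (fun i => f (a i)) = dg V (fun i => f (b i)) := by
  have := intertwine (M := 1) hU hV f (by simpa using h)
  simpa using this

lemma mpow_dg {U : Matrix (Fin d) (Fin d) ℂ} (hU : U ∈ UG d) (a : Fin d → ℝ) (t : ℝ) :
    mpow (dg U a) t = dg U (fun i => a i ^ t) := by
  unfold mpow
  rw [dif_pos (dg_herm U a)]
  have := exists_dg (dg_herm U a)
  exact (dg_fun_congr hU (dg_herm U a).eigenvectorUnitary.2 (fun x => x ^ t) this).symm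

lemma mpow_conj {V M : Matrix (Fin d) (Fin d) ℂ} (hV : V ∈ UG d) (hM : M.IsHermitian) (t : ℝ) :
    mpow (V * M * star V) t = V * mpow M t * star V := by
  rw [exists_dg hM, dg_conj, mpow_dg (mul_mem hV hM.eigenvectorUnitary.2),
    mpow_dg hM.eigenvectorUnitary.2, dg_conj]

lemma trace_dg_mul (U V : Matrix (Fin d) (Fin d) ℂ) (a b : Fin d → ℝ) :
    (dg U a * dg V b).trace = ((∑ i, ∑ j, a i * b j * Complex.normSq ((star U * V) i j) : ℝ) : ℂ) := by
  have h1 : (dg U a * dg V b).trace = (Matrix.diagonal (fun i => (a i : ℂ)) * (star U * V) *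
      (Matrix.diagonal (fun i => (b i : ℂ)) * star (star U * V))).trace := by
    rw [dg, mul_assoc U, mul_assoc U, Matrix.trace_mul_comm, dg, star_mul, star_star]
    simp only [mul_assoc]
  rw [h1, Matrix.trace]
  push_cast
  refine Finset.sum_congr rfl fun i _ => ?_
  rw [Matrix.diag_apply, Matrix.mul_apply]
  refine Finset.sum_congr rfl fun j _ => ?_
  rw [Matrix.diagonal_mul, Matrix.diagonal_mul, Matrix.star_apply, Complex.normSq_eq_conj_mul_self]
  simp only [Complex.star_def]
  ring

lemma ds_of_ug {W : Matrix (Fin d) (Fin d) ℂ} (hW : W ∈ UG d) :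
    (Matrix.of fun i j => Complex.normSq (W i j)) ∈ doublyStochastic ℝ (Fin d) := by
  rw [mem_doublyStochastic_iff_sum]
  refine ⟨fun i j => Complex.normSq_nonneg _, fun i => ?_, fun j => ?_⟩
  · have := congrFun (congrFun (ug_right hW) i) i
    rw [Matrix.mul_apply, Matrix.one_apply_eq] at this
    have h2 : ((∑ j, Complex.normSq (W i j) : ℝ) : ℂ) = 1 := by
      rw [← this]; push_cast
      refine Finset.sum_congr rfl fun j _ => ?_
      rw [Matrix.star_apply, Complex.normSq_eq_conj_mul_self, mul_comm]; rfl
    exact_mod_cast h2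
  · have := congrFun (congrFun (ug_left hW) j) j
    rw [Matrix.mul_apply, Matrix.one_apply_eq] at this
    have h2 : ((∑ i, Complex.normSq (W i j) : ℝ) : ℂ) = 1 := by
      rw [← this]; push_cast
      refine Finset.sum_congr rfl fun j _ => ?_
      rw [Matrix.star_apply, Complex.normSq_eq_conj_mul_self]; rfl
    exact_mod_cast h2

lemma isCompact_ug : IsCompact ((UG d : Submonoid _) : Set (Matrix (Fin d) (Fin d) ℂ)) := by
  have h1 : IsCompact (Set.univ.pi fun _ : Fin d => Set.univ.pi fun _ : Fin d =>
      Metric.closedBall (0 : ℂ) 1) :=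
    isCompact_univ_pi fun _ => isCompact_univ_pi fun _ => isCompact_closedBall _ _
  refine IsCompact.of_isClosed_subset (s := (Set.univ.pi fun _ : Fin d => Set.univ.pi fun _ : Fin d =>
      Metric.closedBall (0 : ℂ) 1)) h1 ?_ ?_
  · have : ((UG d : Submonoid _) : Set (Matrix (Fin d) (Fin d) ℂ)) = {U | U * star U = 1} := by
      ext U; exact Matrix.mem_unitaryGroup_iff
    rw [this]
    exact isClosed_eq (by fun_prop) continuous_const
  · intro U hU i _ j _
    rw [mem_closedBall_zero_iff]
    exact entry_norm_bound_of_unitary hU i j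

lemma exp_dg {U : Matrix (Fin d) (Fin d) ℂ} (hU : U ∈ UG d) (a : Fin d → ℝ) :
    NormedSpace.exp (dg U a) = dg U (fun i => Real.exp (a i)) := by
  have hinv : U⁻¹ = star U := Matrix.inv_eq_right_inv (ug_right hU)
  have hu : IsUnit U := ⟨⟨U, star U, ug_right hU, ug_left hU⟩, rfl⟩
  rw [dg, ← hinv, Matrix.exp_conj _ _ hu, Matrix.exp_diagonal, dg, hinv]
  congr 3
  ext i
  rw [Pi.coe_exp, ← Complex.exp_eq_exp_ℂ]
  simp

lemma dg_smul (U : Matrix (Fin d) (Fin d) ℂ) (c : ℝ) (a : Fin d → ℝ) :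
    (c : ℂ) • dg U a = dg U (fun i => c * a i) := by
  have : Matrix.diagonal (fun i => ((c * a i : ℝ) : ℂ)) =
      (c : ℂ) • Matrix.diagonal (fun i => (a i : ℂ)) := by
    rw [← Matrix.diagonal_smul]; congr 1; ext i; simp
  rw [dg, dg, this, Matrix.mul_smul, Matrix.smul_mul]

/-- power of a product of commuting positive matrices -/
lemma mpow_mul_comm {U V : Matrix (Fin d) (Fin d) ℂ} (hU : U ∈ UG d) (hV : V ∈ UG d)
    {a b : Fin d → ℝ} (ha : ∀ i, 0 < a i) (hb : ∀ i, 0 < b i)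
    (h : dg U a * dg V b = dg V b * dg U a) (z : ℝ) :
    mpow (dg U a * dg V b) z = dg U (fun i => a i ^ z) * dg V (fun i => b i ^ z) := by
  set L := dg U (fun i => Real.log (a i)) with hL
  set K := dg V (fun i => Real.log (b i)) with hK
  have hLK : Commute L K := by
    have h1 := intertwine hV hV Real.log h
    have h2 := intertwine hU hU Real.log (M := K) h1.symm
    exact h2.symm
  have eL : ∀ c : ℝ, NormedSpace.exp ((c : ℂ) • L) = dg U (fun i => a i ^ c) := by
    intro c
    rw [hL, dg_smul, exp_dg hU]
    congr 1; ext i; rw [Real.rpow_def_of_pos (ha i), mul_comm]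
  have eK : ∀ c : ℝ, NormedSpace.exp ((c : ℂ) • K) = dg V (fun i => b i ^ c) := by
    intro c
    rw [hK, dg_smul, exp_dg hV]
    congr 1; ext i; rw [Real.rpow_def_of_pos (hb i), mul_comm]
  have hS : (L + K).IsHermitian := (dg_herm _ _).add (dg_herm _ _)
  have e : ∀ c : ℝ, dg U (fun i => a i ^ c) * dg V (fun i => b i ^ c) =
      dg (hS.eigenvectorUnitary : Matrix (Fin d) (Fin d) ℂ)
        (fun i => Real.exp (c * hS.eigenvalues i)) := by
    intro c
    rw [← eL, ← eK, ← Matrix.exp_add_of_commute _ _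
      ((hLK.smul_left _).smul_right _), ← smul_add]
    conv_lhs => rw [exists_dg hS]
    rw [dg_smul, exp_dg hS.eigenvectorUnitary.2]
  have e1 := e 1
  simp only [Real.rpow_one, one_mul] at e1
  rw [e1, mpow_dg hS.eigenvectorUnitary.2, e z]
  congr 1; ext i
  rw [← Real.exp_mul, mul_comm]

end AZ

namespace AZ
variable {d : ℕ}

lemma rpow_lip (w : ℝ) {m M : ℝ} (hm : 0 < m) : ∃ K, 0 ≤ K ∧ ∀ x ∈ Set.Icc m M, ∀ y ∈ Set.Icc m M,
    |y ^ w - x ^ w| ≤ K * |y - x| := by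
  have hc : ContinuousOn (fun t : ℝ => w * t ^ (w - 1)) (Set.Icc m M) := by
    intro t ht
    have : t ≠ 0 := (hm.trans_le ht.1).ne'
    exact (continuousAt_const.mul (Real.continuousAt_rpow_const _ _ (Or.inl this))).continuousWithinAt
  obtain ⟨K, hK⟩ := isCompact_Icc.exists_bound_of_continuousOn hc
  refine ⟨max K 0, le_max_right _ _, fun x hx y hy => ?_⟩
  have := Convex.norm_image_sub_le_of_norm_hasDerivWithin_le (f := fun t : ℝ => t ^ w)
    (f' := fun t => w * t ^ (w - 1)) (C := max K 0) (s := Set.Icc m M) (x := x) (y := y)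
    (fun t ht => (Real.hasDerivAt_rpow_const (Or.inl (hm.trans_le ht.1).ne')).hasDerivWithinAt)
    (fun t ht => (hK t ht).trans (le_max_left _ _)) (convex_Icc _ _) hx hy
  simpa [Real.norm_eq_abs] using this

lemma rpow_taylor (z : ℝ) {m M : ℝ} (hm : 0 < m) : ∃ C, 0 ≤ C ∧ ∀ x ∈ Set.Icc m M,
    ∀ y ∈ Set.Icc m M, |y ^ z - x ^ z - z * x ^ (z - 1) * (y - x)| ≤ C * (y - x) ^ 2 := by
  obtain ⟨K, hK0, hK⟩ := rpow_lip (z - 1) (M := M) hm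
  refine ⟨|z| * K, by positivity, fun x hx y hy => ?_⟩
  have hsub : Set.uIcc x y ⊆ Set.Icc m M := Set.uIcc_subset_Icc hx hy
  have := Convex.norm_image_sub_le_of_norm_hasDerivWithin_le
    (f := fun t : ℝ => t ^ z - z * x ^ (z - 1) * t)
    (f' := fun t => z * t ^ (z - 1) - z * x ^ (z - 1) * 1) (C := |z| * (K * |y - x|))
    (s := Set.uIcc x y) (x := x) (y := y)
    (fun t ht => (((Real.hasDerivAt_rpow_const (Or.inl (hm.trans_le (hsub ht).1).ne'))).sub
      ((hasDerivAt_id t).const_mul _)).hasDerivWithinAt)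
    (fun t ht => by
      have e : z * t ^ (z - 1) - z * x ^ (z - 1) * 1 = z * (t ^ (z - 1) - x ^ (z - 1)) := by ring
      rw [e, Real.norm_eq_abs, abs_mul]
      refine mul_le_mul_of_nonneg_left ((hK x hx t (hsub ht)).trans ?_) (abs_nonneg _)
      refine mul_le_mul_of_nonneg_left ?_ hK0
      exact Set.abs_sub_left_of_mem_uIcc ht) (convex_uIcc _ _) Set.left_mem_uIcc Set.right_mem_uIcc
  rw [Real.norm_eq_abs, Real.norm_eq_abs] at this
  have e : y ^ z - z * x ^ (z - 1) * y - (x ^ z - z * x ^ (z - 1) * x) =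
    y ^ z - x ^ z - z * x ^ (z - 1) * (y - x) := by ring
  rw [e] at this
  refine this.trans (le_of_eq ?_)
  rw [← sq_abs (y - x)]; ring

lemma mat_taylor (z : ℝ) {m M C : ℝ}
    (hC : ∀ x ∈ Set.Icc m M,
    ∀ y ∈ Set.Icc m M, |y ^ z - x ^ z - z * x ^ (z - 1) * (y - x)| ≤ C * (y - x) ^ 2)
    {U V : Matrix (Fin d) (Fin d) ℂ} (hU : U ∈ UG d) (hV : V ∈ UG d) {x y : Fin d → ℝ}
    (hx : ∀ i, x i ∈ Set.Icc m M) (hy : ∀ i, y i ∈ Set.Icc m M) :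
    |(∑ i, y i ^ z) - (∑ i, x i ^ z) -
      z * (dg U (fun i => x i ^ (z - 1)) * (dg V y - dg U x)).trace.re| ≤
      C * ((dg V y - dg U x) * (dg V y - dg U x)).trace.re := by
  set w : Fin d → Fin d → ℝ := fun i j => Complex.normSq ((star U * V) i j) with hw
  have hds := ds_of_ug (mul_mem (ug_star hU) hV)
  rw [mem_doublyStochastic_iff_sum] at hds
  obtain ⟨h0, hr, hc⟩ := hds
  have hr : ∀ i, ∑ j, w i j = 1 := hr
  have hc : ∀ j, ∑ i, w i j = 1 := hc
  have h0 : ∀ i j, 0 ≤ w i j := h0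
  have sx : ∀ f : Fin d → ℝ, ∑ i, f i = ∑ i, ∑ j, f i * w i j := by
    intro f; refine Finset.sum_congr rfl fun i _ => ?_
    rw [← Finset.mul_sum, hr, mul_one]
  have sy : ∀ f : Fin d → ℝ, ∑ i, f i = ∑ i, ∑ j, f j * w i j := by
    intro f; rw [Finset.sum_comm]; refine Finset.sum_congr rfl fun i _ => ?_
    rw [← Finset.mul_sum, hc, mul_one]
  have t1 : (dg U (fun i => x i ^ (z - 1)) * (dg V y - dg U x)).trace.re =
      ∑ i, ∑ j, (x i ^ (z - 1) * (y j - x i)) * w i j := by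
    rw [mul_sub, Matrix.trace_sub, trace_dg_mul, dg_mul hU, dg_trace hU, ← Complex.ofReal_sub,
      Complex.ofReal_re, sx (fun i => x i ^ (z - 1) * x i), ← Finset.sum_sub_distrib]
    refine Finset.sum_congr rfl fun i _ => ?_
    rw [← Finset.sum_sub_distrib]
    refine Finset.sum_congr rfl fun j _ => ?_
    simp only [hw]; ring
  have t2 : ((dg V y - dg U x) * (dg V y - dg U x)).trace.re =
      ∑ i, ∑ j, (y j - x i) ^ 2 * w i j := by
    have : ((dg V y - dg U x) * (dg V y - dg U x)).trace =
      (dg V y * dg V y).trace - 2 * (dg U x * dg V y).trace + (dg U x * dg U x).trace := by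
      rw [sub_mul, mul_sub, mul_sub]
      simp only [Matrix.trace_sub]
      rw [Matrix.trace_mul_comm (dg V y) (dg U x)]; ring
    rw [this, dg_mul hU, dg_mul hV, dg_trace hU, dg_trace hV, trace_dg_mul]
    have e2 : (2 : ℂ) = ((2 : ℝ) : ℂ) := by norm_num
    rw [e2, ← Complex.ofReal_mul, ← Complex.ofReal_sub, ← Complex.ofReal_add, Complex.ofReal_re,
      sx (fun i => x i * x i), sy (fun i => y i * y i), Finset.mul_sum, ← Finset.sum_sub_distrib,
      ← Finset.sum_add_distrib]
    refine Finset.sum_congr rfl fun i _ => ?_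
    rw [Finset.mul_sum, ← Finset.sum_sub_distrib, ← Finset.sum_add_distrib]
    refine Finset.sum_congr rfl fun j _ => ?_
    simp only [hw]; ring
  have t3 : (∑ i, y i ^ z) - (∑ i, x i ^ z) -
      z * (dg U (fun i => x i ^ (z - 1)) * (dg V y - dg U x)).trace.re =
      ∑ i, ∑ j, (y j ^ z - x i ^ z - z * x i ^ (z - 1) * (y j - x i)) * w i j := by
    rw [t1, sx (fun i => x i ^ z), sy (fun i => y i ^ z), ← Finset.sum_sub_distrib, Finset.mul_sum,
      ← Finset.sum_sub_distrib]
    refine Finset.sum_congr rfl fun i _ => ?_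
    rw [Finset.mul_sum, ← Finset.sum_sub_distrib, ← Finset.sum_sub_distrib]
    refine Finset.sum_congr rfl fun j _ => ?_
    ring
  rw [t3, t2, Finset.mul_sum]
  refine (Finset.abs_sum_le_sum_abs _ _).trans (Finset.sum_le_sum fun i _ => ?_)
  rw [Finset.mul_sum]
  refine (Finset.abs_sum_le_sum_abs _ _).trans (Finset.sum_le_sum fun j _ => ?_)
  rw [abs_mul, abs_of_nonneg (h0 i j), ← mul_assoc]
  exact mul_le_mul_of_nonneg_right (hC _ (hx i) _ (hy j)) (h0 i j)

noncomputable def XX (s a : Fin d → ℝ) (T : Matrix (Fin d) (Fin d) ℂ) : Matrix (Fin d) (Fin d) ℂ :=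
  dg 1 s * dg T a * dg 1 s

noncomputable def GG (s a : Fin d → ℝ) (z : ℝ) (T : Matrix (Fin d) (Fin d) ℂ) : ℝ :=
  (mpow (XX s a T) z).trace.re

lemma XX_herm (s a : Fin d → ℝ) (T : Matrix (Fin d) (Fin d) ℂ) : (XX s a T).IsHermitian := by
  unfold XX Matrix.IsHermitian
  rw [Matrix.conjTranspose_mul, Matrix.conjTranspose_mul, (dg_herm _ _).eq, (dg_herm _ _).eq,
    mul_assoc]

lemma dg_posDef {U : Matrix (Fin d) (Fin d) ℂ} (hU : U ∈ UG d) {a : Fin d → ℝ}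
    (ha : ∀ i, 0 < a i) : (dg U a).PosDef := by
  unfold dg
  rw [Matrix.star_eq_conjTranspose]
  refine Matrix.PosDef.mul_mul_conjTranspose_same (Matrix.PosDef.diagonal fun i => by
    simpa using ha i) ?_
  exact Matrix.vecMul_injective_of_isUnit ⟨⟨U, star U, ug_right hU, ug_left hU⟩, rfl⟩

lemma dg_mul_inv {U : Matrix (Fin d) (Fin d) ℂ} (hU : U ∈ UG d) {a : Fin d → ℝ}
    (ha : ∀ i, 0 < a i) : dg U a * dg U (fun i => (a i)⁻¹) = 1 := by
  rw [dg_mul hU, ← dg_one hU]; congr 1; ext i; exact mul_inv_cancel₀ (ha i).ne'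

lemma dg_inv_mul {U : Matrix (Fin d) (Fin d) ℂ} (hU : U ∈ UG d) {a : Fin d → ℝ}
    (ha : ∀ i, 0 < a i) : dg U (fun i => (a i)⁻¹) * dg U a = 1 := by
  rw [dg_mul hU, ← dg_one hU]; congr 1; ext i; exact inv_mul_cancel₀ (ha i).ne'

lemma XX_trace_le {s a : Fin d → ℝ} (ha : ∀ i, 0 < a i) {T : Matrix (Fin d) (Fin d) ℂ}
    (hT : T ∈ UG d) :
    (XX s a T).trace.re ≤ ∑ i, ∑ j, a i * (s j * s j) := by
  have e : (XX s a T).trace = (dg T a * dg 1 (fun i => s i * s i)).trace := by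
    rw [XX, Matrix.trace_mul_comm, ← mul_assoc, dg_mul (one_mem _), Matrix.trace_mul_comm]
  rw [e, trace_dg_mul, Complex.ofReal_re]
  have hds := ds_of_ug (mul_mem (ug_star hT) (one_mem (UG d)))
  refine Finset.sum_le_sum fun i _ => Finset.sum_le_sum fun j _ => ?_
  have h1 := le_one_of_mem_doublyStochastic hds (i := i) (j := j)
  rw [Matrix.of_apply] at h1
  exact mul_le_of_le_one_right (mul_nonneg (ha i).le (mul_self_nonneg _)) h1

lemma XX_bounds {s a : Fin d → ℝ} (hs : ∀ i, 0 < s i) (ha : ∀ i, 0 < a i) :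
    ∃ m M : ℝ, 0 < m ∧ ∀ T ∈ UG d, ∃ V ∈ UG d, ∃ x : Fin d → ℝ, XX s a T = dg V x ∧
      ∀ i, x i ∈ Set.Icc m M := by
  set M' : ℝ := (∑ i, ∑ j, (a i)⁻¹ * ((s j)⁻¹ * (s j)⁻¹)) with hM'
  have hM'0 : 0 ≤ M' := Finset.sum_nonneg fun i _ => Finset.sum_nonneg fun j _ => by
    have := ha i; have := hs j; positivity
  refine ⟨(M' + 1)⁻¹, ∑ i, ∑ j, a i * (s j * s j), by positivity, fun T hT => ?_⟩
  have hX := XX_herm s a T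
  have hXd := exists_dg hX
  set V : Matrix (Fin d) (Fin d) ℂ := (hX.eigenvectorUnitary : Matrix (Fin d) (Fin d) ℂ) with hVd
  have hV : V ∈ UG d := hX.eigenvectorUnitary.2
  set x := hX.eigenvalues with hxd
  have hpd : (XX s a T).PosDef := by
    have h1 : (dg 1 s * dg T a * (dg 1 s)ᴴ).PosDef := by
      refine Matrix.PosDef.mul_mul_conjTranspose_same (dg_posDef hT ha) ?_
      exact Matrix.vecMul_injective_of_isUnit ⟨⟨dg 1 s, dg 1 (fun i => (s i)⁻¹),
        dg_mul_inv (one_mem _) hs, dg_inv_mul (one_mem _) hs⟩, rfl⟩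
    rwa [(dg_herm _ _).eq] at h1
  have hx : ∀ i, 0 < x i := fun i => hpd.eigenvalues_pos i
  refine ⟨V, hV, x, hXd, fun i => ⟨?_, ?_⟩⟩
  · have hinv : dg V (fun i => (x i)⁻¹) = XX (fun i => (s i)⁻¹) (fun i => (a i)⁻¹) T := by
      have l1 : dg V (fun i => (x i)⁻¹) * XX s a T = 1 := by
        rw [hXd]; exact dg_inv_mul hV hx
      have l2 : XX s a T * XX (fun i => (s i)⁻¹) (fun i => (a i)⁻¹) T = 1 := by
        have e : XX s a T * XX (fun i => (s i)⁻¹) (fun i => (a i)⁻¹) T =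
          dg 1 s * (dg T a * (dg 1 s * dg 1 (fun i => (s i)⁻¹)) * dg T (fun i => (a i)⁻¹)) *
            dg 1 (fun i => (s i)⁻¹) := by simp only [XX, mul_assoc]
        rw [e, dg_mul_inv (one_mem _) hs, mul_one, dg_mul_inv hT ha, mul_one,
          dg_mul_inv (one_mem _) hs]
      exact left_inv_eq_right_inv l1 l2
    have h1 : ∑ i, (x i)⁻¹ ≤ M' := by
      have := XX_trace_le (s := fun i => (s i)⁻¹) (fun i => inv_pos.2 (ha i)) hT
      rwa [← hinv, dg_trace hV, Complex.ofReal_re] at this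
    have h2 : (x i)⁻¹ ≤ M' + 1 := by
      have := Finset.single_le_sum (f := fun i => (x i)⁻¹) (fun i _ => (inv_pos.2 (hx i)).le)
        (Finset.mem_univ i)
      linarith
    exact inv_le_of_inv_le₀ (hx i) h2
  · have := XX_trace_le (s := s) ha hT
    rw [hXd, dg_trace hV, Complex.ofReal_re] at this
    exact (Finset.single_le_sum (f := x) (fun i _ => (hx i).le) (Finset.mem_univ i)).trans this

lemma GG_taylor {s a : Fin d → ℝ} (hs : ∀ i, 0 < s i) (ha : ∀ i, 0 < a i) (z : ℝ) :
    ∃ C : ℝ, 0 ≤ C ∧ ∀ T ∈ UG d, ∀ T' ∈ UG d,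
      |GG s a z T' - GG s a z T -
        z * (mpow (XX s a T) (z - 1) * (XX s a T' - XX s a T)).trace.re| ≤
      C * ((XX s a T' - XX s a T) * (XX s a T' - XX s a T)).trace.re := by
  obtain ⟨m, M, hm, hb⟩ := XX_bounds hs ha
  obtain ⟨C, hC0, hC⟩ := rpow_taylor z (M := M) hm
  refine ⟨C, hC0, fun T hT T' hT' => ?_⟩
  obtain ⟨U, hU, x, hx, hxb⟩ := hb T hT
  obtain ⟨V, hV, y, hy, hyb⟩ := hb T' hT'
  have := mat_taylor z hC hU hV hxb hyb
  unfold GG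
  rw [hx, hy, mpow_dg hU, mpow_dg hV, mpow_dg hU, dg_trace hU, dg_trace hV, Complex.ofReal_re,
    Complex.ofReal_re]
  exact this

lemma XX_cont (s a : Fin d → ℝ) : Continuous (XX s a) := by
  have h : Continuous fun T : Matrix (Fin d) (Fin d) ℂ => dg T a :=
    (continuous_id.matrix_mul continuous_const).matrix_mul continuous_star
  exact (continuous_const.matrix_mul h).matrix_mul continuous_const

lemma GG_cont {s a : Fin d → ℝ} (hs : ∀ i, 0 < s i) (ha : ∀ i, 0 < a i) (z : ℝ) :
    ContinuousOn (GG s a z) (UG d : Set (Matrix (Fin d) (Fin d) ℂ)) := by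
  obtain ⟨C, hC0, hC⟩ := GG_taylor hs ha z
  have hX := XX_cont s a
  intro T hT
  rw [ContinuousWithinAt, tendsto_iff_dist_tendsto_zero]
  have hc : Continuous fun T' => |z * (mpow (XX s a T) (z - 1) * (XX s a T' - XX s a T)).trace.re| +
      C * ((XX s a T' - XX s a T) * (XX s a T' - XX s a T)).trace.re := by
    have h1 : Continuous fun T' => (mpow (XX s a T) (z - 1) * (XX s a T' - XX s a T)).trace := by
      fun_prop
    have h2 : Continuous fun T' => ((XX s a T' - XX s a T) * (XX s a T' - XX s a T)).trace := by
      fun_prop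
    exact (continuous_const.mul (Complex.continuous_re.comp h1)).abs.add
      (continuous_const.mul (Complex.continuous_re.comp h2))
  have h0 := hc.tendsto T
  simp only [sub_self, mul_zero, Matrix.trace_zero, Complex.zero_re, abs_zero, add_zero] at h0
  refine squeeze_zero' (Filter.Eventually.of_forall fun _ => dist_nonneg) ?_
    (h0.mono_left nhdsWithin_le_nhds)
  filter_upwards [self_mem_nhdsWithin] with T' hT'
  have := hC T hT T' hT'
  rw [Real.dist_eq]
  calc _ = |(GG s a z T' - GG s a z T -
        z * (mpow (XX s a T) (z - 1) * (XX s a T' - XX s a T)).trace.re) +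
        z * (mpow (XX s a T) (z - 1) * (XX s a T' - XX s a T)).trace.re| := by congr 1; ring
    _ ≤ _ := abs_add_le _ _
    _ ≤ _ := by linarith

end AZ

namespace AZ
variable {d : ℕ}

noncomputable def KK (J : Matrix (Fin d) (Fin d) ℂ) (θ : ℝ) : Matrix (Fin d) (Fin d) ℂ :=
  (Real.cos θ : ℂ) • (1 : Matrix (Fin d) (Fin d) ℂ) + (Complex.I * (Real.sin θ : ℂ)) • J

lemma KK_star {J : Matrix (Fin d) (Fin d) ℂ} (hJ : star J = J) (θ : ℝ) :
    star (KK J θ) = (Real.cos θ : ℂ) • (1 : Matrix (Fin d) (Fin d) ℂ) -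
      (Complex.I * (Real.sin θ : ℂ)) • J := by
  rw [KK, star_add, star_smul, star_smul, hJ, star_one, sub_eq_add_neg, ← neg_smul]
  congr 2
  · simp only [Complex.star_def, Complex.conj_ofReal]
  · simp only [Complex.star_def, Complex.conj_ofReal, map_mul, Complex.conj_I]
    ring

lemma cs_sq (θ : ℝ) : (Real.cos θ : ℂ) ^ 2 = 1 - (Real.sin θ : ℂ) ^ 2 := by
  rw [← Complex.ofReal_pow, Real.cos_sq']
  push_cast; rfl

lemma KK_conj {J : Matrix (Fin d) (Fin d) ℂ} (hJ : star J = J) (A : Matrix (Fin d) (Fin d) ℂ)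
    (θ : ℝ) :
    KK J θ * A * star (KK J θ) = A + (Real.sin θ : ℂ) • ((Real.cos θ : ℂ) •
      (Complex.I • (J * A - A * J)) + (Real.sin θ : ℂ) • (J * A * J - A)) := by
  rw [KK_star hJ, KK]
  have h1 := cs_sq θ
  have hI := Complex.I_sq
  simp only [add_mul, mul_sub, smul_mul_assoc, mul_smul_comm, one_mul, mul_one, smul_sub,
    smul_add, smul_smul]
  set c : ℂ := (Real.cos θ : ℂ)
  set t : ℂ := (Real.sin θ : ℂ)
  have e1 : c * c = 1 - t * t := by linear_combination h1
  have e2 : Complex.I * t * (Complex.I * t) = - (t * t) := by linear_combination t^2 * hI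
  rw [e1, e2]
  module

lemma KK_mem {J : Matrix (Fin d) (Fin d) ℂ} (hJ : star J = J) (hJ2 : J * J = 1) (θ : ℝ) :
    KK J θ ∈ UG d := by
  rw [Matrix.mem_unitaryGroup_iff]
  have := KK_conj hJ 1 θ
  simpa [hJ2] using this

lemma KK_cont (J : Matrix (Fin d) (Fin d) ℂ) : Continuous (KK J) := by
  unfold KK
  have h1 : Continuous fun θ : ℝ => (Real.cos θ : ℂ) :=
    Complex.continuous_ofReal.comp Real.continuous_cos
  have h2 : Continuous fun θ : ℝ => (Real.sin θ : ℂ) :=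
    Complex.continuous_ofReal.comp Real.continuous_sin
  exact (h1.smul continuous_const).add ((continuous_const.mul h2).smul continuous_const)

lemma scalar_crit {l1 l2 C q1 q2 q3 : ℝ}
    (h : ∀ θ : ℝ, Real.sin θ * (Real.cos θ * l1 + Real.sin θ * (l2 - C *
      (Real.cos θ ^ 2 * q1 + Real.cos θ * Real.sin θ * q2 + Real.sin θ ^ 2 * q3))) ≤ 0) :
    l1 = 0 := by
  set g : ℝ → ℝ := fun θ => Real.cos θ * l1 + Real.sin θ * (l2 - C *
      (Real.cos θ ^ 2 * q1 + Real.cos θ * Real.sin θ * q2 + Real.sin θ ^ 2 * q3)) with hg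
  have hgd : DifferentiableAt ℝ g 0 := by
    rw [hg]; fun_prop
  have hd := (Real.hasDerivAt_sin 0).mul hgd.hasDerivAt
  have hmax : IsLocalMax (Real.sin * g) 0 := by
    refine Filter.Eventually.of_forall fun θ => ?_
    have h0 : (Real.sin * g) 0 = 0 := by simp
    rw [h0]; exact h θ
  have := hmax.hasDerivAt_eq_zero hd
  simpa [hg] using this

lemma crit_comm {Y A : Matrix (Fin d) (Fin d) ℂ} (hY : star Y = Y) (hA : star A = A)
    (h : ∀ J : Matrix (Fin d) (Fin d) ℂ, star J = J → J * J = 1 →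
      (Y * (Complex.I • (J * A - A * J))).trace.re = 0) : A * Y = Y * A := by
  set K : Matrix (Fin d) (Fin d) ℂ := Complex.I • (A * Y - Y * A) with hK
  have hKs : K.IsHermitian := by
    rw [Matrix.IsHermitian, ← Matrix.star_eq_conjTranspose, hK, star_smul, star_sub, star_mul,
      star_mul, hA, hY, Complex.star_def, Complex.conj_I, neg_smul, ← smul_neg, neg_sub]
  have hKd := exists_dg hKs
  set V : Matrix (Fin d) (Fin d) ℂ := (hKs.eigenvectorUnitary : Matrix (Fin d) (Fin d) ℂ)
  have hV : V ∈ UG d := hKs.eigenvectorUnitary.2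
  set k := hKs.eigenvalues
  set J := dg V (fun i => if 0 ≤ k i then 1 else -1) with hJ
  have hJs : star J = J := dg_herm _ _
  have hJ2 : J * J = 1 := by
    rw [hJ, dg_mul hV, ← dg_one hV]; congr 1; ext i; split_ifs <;> norm_num
  have h1 := h J hJs hJ2
  have e : (Y * (Complex.I • (J * A - A * J))).trace = (J * K).trace := by
    rw [hK, mul_smul_comm, mul_smul_comm, Matrix.trace_smul, Matrix.trace_smul, mul_sub, mul_sub,
      Matrix.trace_sub, Matrix.trace_sub, Matrix.trace_mul_comm Y, mul_assoc J A Y,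
      ← mul_assoc Y A J, Matrix.trace_mul_comm (Y * A) J]
  rw [e, hKd, hJ, dg_mul hV, dg_trace hV, Complex.ofReal_re] at h1
  have h2 : ∀ i, (if 0 ≤ k i then (1:ℝ) else -1) * k i = |k i| := by
    intro i; split_ifs with hi
    · rw [abs_of_nonneg hi, one_mul]
    · rw [abs_of_neg (not_le.1 hi)]; ring
  simp only [h2] at h1
  rw [Finset.sum_eq_zero_iff_of_nonneg (fun i _ => abs_nonneg _)] at h1
  have hk : k = fun _ => 0 := by ext i; exact abs_eq_zero.1 (h1 i (Finset.mem_univ i))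
  have hK0 : K = 0 := by rw [hKd, hk]; simp [dg]
  rw [hK, smul_eq_zero] at hK0
  exact sub_eq_zero.1 (hK0.resolve_left Complex.I_ne_zero)

lemma crit {s a : Fin d → ℝ} (hs : ∀ i, 0 < s i) (ha : ∀ i, 0 < a i) {z : ℝ} (hz : 0 < z)
    {T : Matrix (Fin d) (Fin d) ℂ} (hT : T ∈ UG d) (ε : ℝ) (hε : ε = 1 ∨ ε = -1)
    (hext : ∀ T' ∈ UG d, ε * GG s a z T' ≤ ε * GG s a z T)
    {J : Matrix (Fin d) (Fin d) ℂ} (hJ : star J = J) (hJ2 : J * J = 1) :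
    ((dg 1 s * mpow (XX s a T) (z - 1) * dg 1 s) *
      (Complex.I • (J * dg T a - dg T a * J))).trace.re = 0 := by
  obtain ⟨C, hC0, hC⟩ := GG_taylor hs ha z
  set A := dg T a with hA
  set D := dg (1 : Matrix (Fin d) (Fin d) ℂ) s with hD
  set P := mpow (XX s a T) (z - 1) with hP
  set E1 := Complex.I • (J * A - A * J) with hE1
  set E2 := J * A * J - A with hE2
  have hdiff : ∀ θ : ℝ, XX s a (KK J θ * T) - XX s a T =
      (Real.sin θ : ℂ) • ((Real.cos θ : ℂ) • (D * E1 * D) + (Real.sin θ : ℂ) • (D * E2 * D)) := by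
    intro θ
    have e : dg (KK J θ * T) a = A + (Real.sin θ : ℂ) • ((Real.cos θ : ℂ) • E1 +
        (Real.sin θ : ℂ) • E2) := by
      rw [← dg_conj, KK_conj hJ]
    rw [XX, XX, e, ← hD, ← hA]
    simp only [mul_add, add_mul, smul_mul_assoc, mul_smul_comm]
    abel
  set F1 := D * E1 * D with hF1
  set F2 := D * E2 * D with hF2
  have hl : ∀ F : Matrix (Fin d) (Fin d) ℂ, (P * (D * F * D)).trace = (D * P * D * F).trace := by
    intro F
    rw [← mul_assoc, Matrix.trace_mul_comm]
    simp only [mul_assoc]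
  have key : ε * z * (P * F1).trace.re = 0 := by
    refine scalar_crit (l2 := ε * z * (P * F2).trace.re) (C := C) (q1 := (F1 * F1).trace.re)
      (q2 := 2 * (F1 * F2).trace.re) (q3 := (F2 * F2).trace.re) fun θ => ?_
    have h1 := hC T hT _ (mul_mem (KK_mem hJ hJ2 θ) hT)
    have h2 := hext _ (mul_mem (KK_mem hJ hJ2 θ) hT)
    rw [hdiff θ, ← hP] at h1
    have t1 : (P * ((Real.sin θ : ℂ) • ((Real.cos θ : ℂ) • F1 + (Real.sin θ : ℂ) • F2))).trace.re =
        Real.sin θ * (Real.cos θ * (P * F1).trace.re + Real.sin θ * (P * F2).trace.re) := by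
      simp only [mul_add, mul_smul_comm, Matrix.trace_add, Matrix.trace_smul, smul_eq_mul,
        Complex.re_ofReal_mul, Complex.add_re]
    have t2 : (((Real.sin θ : ℂ) • ((Real.cos θ : ℂ) • F1 + (Real.sin θ : ℂ) • F2)) *
        ((Real.sin θ : ℂ) • ((Real.cos θ : ℂ) • F1 + (Real.sin θ : ℂ) • F2))).trace.re =
        Real.sin θ ^ 2 * (Real.cos θ ^ 2 * (F1 * F1).trace.re + Real.cos θ * Real.sin θ *
          (2 * (F1 * F2).trace.re) + Real.sin θ ^ 2 * (F2 * F2).trace.re) := by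
      simp only [mul_add, add_mul, mul_smul_comm, smul_mul_assoc, Matrix.trace_add,
        Matrix.trace_smul, smul_eq_mul, Complex.re_ofReal_mul, Complex.add_re]
      rw [Matrix.trace_mul_comm F2 F1]
      ring
    rw [t1, t2] at h1
    have h3 := abs_le.1 h1
    rcases hε with rfl | rfl
    · nlinarith [h3.1, h3.2, h2]
    · nlinarith [h3.1, h3.2, h2]
  have hε0 : ε * z ≠ 0 := by
    rcases hε with rfl | rfl
    · simpa using hz.ne'
    · simpa using hz.ne'
  have := (mul_eq_zero.1 key).resolve_left hε0
  rw [hF1, hl] at this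
  exact this

lemma monoid_cancel {R : Type*} [Monoid R] {D E A : R} (h1 : E * D = 1) (h2 : D * E = 1)
    (h : (D * D) * (D * A * D) = (D * A * D) * (D * D)) : (D * D) * A = A * (D * D) := by
  have e1 : E * ((D * D) * (D * A * D)) * E = (E * D) * (D * D * A) * (D * E) := by
    simp only [mul_assoc]
  have e2 : E * ((D * A * D) * (D * D)) * E = (E * D) * (A * (D * D)) * (D * E) := by
    simp only [mul_assoc]
  rw [h, e2, h1, h2, one_mul, one_mul, mul_one, mul_one] at e1
  exact e1.symm

lemma crit_value {s a : Fin d → ℝ} (hs : ∀ i, 0 < s i) (ha : ∀ i, 0 < a i) {z : ℝ} (hz : 0 < z)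
    {T : Matrix (Fin d) (Fin d) ℂ} (hT : T ∈ UG d) (ε : ℝ) (hε : ε = 1 ∨ ε = -1)
    (hext : ∀ T' ∈ UG d, ε * GG s a z T' ≤ ε * GG s a z T) :
    GG s a z T = ∑ i, ∑ j, a i ^ z * (s j * s j) ^ z *
      Complex.normSq ((star T * (1 : Matrix (Fin d) (Fin d) ℂ)) i j) := by
  have h1 : (1 : Matrix (Fin d) (Fin d) ℂ) ∈ UG d := one_mem _
  obtain ⟨m, M, hm, hb⟩ := XX_bounds hs ha
  obtain ⟨V, hV, x, hx, hxb⟩ := hb T hT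
  have hx0 : ∀ i, 0 < x i := fun i => hm.trans_le (hxb i).1
  set A := dg T a with hA
  set D := dg (1 : Matrix (Fin d) (Fin d) ℂ) s with hD
  have hXD : XX s a T = D * A * D := rfl
  have hP : mpow (XX s a T) (z - 1) = dg V (fun i => x i ^ (z - 1)) := by
    rw [hx, mpow_dg hV]
  have hDs : star D = D := dg_herm _ _
  have hPs : star (mpow (XX s a T) (z - 1)) = mpow (XX s a T) (z - 1) := by
    rw [hP]; exact dg_herm _ _
  have hc : A * (D * mpow (XX s a T) (z - 1) * D) = D * mpow (XX s a T) (z - 1) * D * A := by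
    refine crit_comm ?_ (dg_herm _ _) fun J hJ hJ2 => crit hs ha hz hT ε hε hext hJ hJ2
    rw [star_mul, star_mul, hPs, hDs, mul_assoc]
  set P := mpow (XX s a T) (z - 1) with hPd
  have hXz1 : XX s a T * P = dg V (fun i => x i ^ z) := by
    rw [hP, hx, dg_mul hV]; congr 1; ext i
    rw [Real.rpow_sub_one (hx0 i).ne']; field_simp [(hx0 i).ne']
  have hXz2 : P * XX s a T = dg V (fun i => x i ^ z) := by
    rw [hP, hx, dg_mul hV]; congr 1; ext i
    rw [Real.rpow_sub_one (hx0 i).ne']; field_simp [(hx0 i).ne']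
  have hcz : (D * D) * dg V (fun i => x i ^ z) = dg V (fun i => x i ^ z) * (D * D) := by
    have : D * (A * (D * P * D)) * D = D * (D * P * D * A) * D := by rw [hc]
    have e1 : D * (A * (D * P * D)) * D = (D * A * D * P) * (D * D) := by simp only [mul_assoc]
    have e2 : D * (D * P * D * A) * D = (D * D) * (P * (D * A * D)) := by simp only [mul_assoc]
    rw [e1, e2, ← hXD, hXz1, hXz2] at this
    exact this.symm
  have hcx : (D * D) * XX s a T = XX s a T * (D * D) := by
    have := intertwine hV hV (fun t => t ^ z⁻¹) hcz
    have e : (fun i => (x i ^ z) ^ z⁻¹) = x := by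
      ext i; exact Real.rpow_rpow_inv (hx0 i).le hz.ne'
    simp only [e] at this
    rwa [hx]
  have hDi1 : dg 1 (fun i => (s i)⁻¹) * D = 1 := dg_inv_mul h1 hs
  have hDi2 : D * dg 1 (fun i => (s i)⁻¹) = 1 := dg_mul_inv h1 hs
  have hcA : (D * D) * A = A * (D * D) := by
    rw [hXD] at hcx
    exact monoid_cancel hDi1 hDi2 hcx
  have hDD : D * D = dg 1 (fun i => s i * s i) := dg_mul h1 _ _
  have hcA' : A * D = D * A := by
    rw [hDD] at hcA
    have := intertwine h1 h1 Real.sqrt hcA.symm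
    have e : (fun i => Real.sqrt (s i * s i)) = s := by
      ext i; exact Real.sqrt_mul_self (hs i).le
    rw [e] at this
    exact this
  have hXA : XX s a T = A * (D * D) := by rw [hXD, ← hcA', mul_assoc]
  unfold GG
  rw [hXA, hDD, hA, mpow_mul_comm hT h1 ha (fun i => mul_pos (hs i) (hs i))
    (by rw [← hDD, ← hA, hcA]), trace_dg_mul, Complex.ofReal_re]

lemma GG_bound {s a : Fin d → ℝ} (hs : ∀ i, 0 < s i) (ha : ∀ i, 0 < a i) {z : ℝ} (hz : 0 < z)
    {lo hi : ℝ} (h : ∀ w ∈ doublyStochastic ℝ (Fin d),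
      lo ≤ ∑ i, ∑ j, a i ^ z * (s j * s j) ^ z * w i j ∧
      ∑ i, ∑ j, a i ^ z * (s j * s j) ^ z * w i j ≤ hi)
    {T : Matrix (Fin d) (Fin d) ℂ} (hT : T ∈ UG d) : lo ≤ GG s a z T ∧ GG s a z T ≤ hi := by
  have hne : ((UG d : Submonoid _) : Set (Matrix (Fin d) (Fin d) ℂ)).Nonempty := ⟨1, one_mem _⟩
  constructor
  · obtain ⟨T0, hT0, hmin⟩ := isCompact_ug.exists_isMinOn hne (GG_cont hs ha z)
    have e := crit_value hs ha hz hT0 (-1) (Or.inr rfl) fun T' hT' => by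
      have : GG s a z T0 ≤ GG s a z T' := hmin hT'
      linarith
    have := (h _ (ds_of_ug (mul_mem (ug_star hT0) (one_mem (UG d))))).1
    simp only [Matrix.of_apply] at this
    rw [← e] at this
    exact this.trans (hmin hT)
  · obtain ⟨T0, hT0, hmax⟩ := isCompact_ug.exists_isMaxOn hne (GG_cont hs ha z)
    have e := crit_value hs ha hz hT0 1 (Or.inl rfl) fun T' hT' => by
      have : GG s a z T' ≤ GG s a z T0 := hmax hT'
      linarith
    have := (h _ (ds_of_ug (mul_mem (ug_star hT0) (one_mem (UG d))))).2
    simp only [Matrix.of_apply] at this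
    rw [← e] at this
    exact (show GG s a z T ≤ GG s a z T0 from hmax hT).trans this

end AZ

namespace AZ
variable {d : ℕ}

lemma ds_le {f g : Fin d → ℝ} (h : Monovary f g) {w : Matrix (Fin d) (Fin d) ℝ}
    (hw : w ∈ doublyStochastic ℝ (Fin d)) :
    ∑ i, ∑ j, f i * g j * w i j ≤ ∑ i, f i * g i := by
  obtain ⟨c, hc0, hc1, rfl⟩ := exists_eq_sum_perm_of_mem_doublyStochastic hw
  have e : ∑ i, ∑ j, f i * g j * (∑ τ : Equiv.Perm (Fin d), c τ • τ.permMatrix ℝ) i j =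
      ∑ τ : Equiv.Perm (Fin d), c τ * ∑ i, f i * g (τ i) := by
    simp only [Matrix.sum_apply, Matrix.smul_apply, smul_eq_mul, Finset.mul_sum]
    have : ∀ i : Fin d, ∑ j, ∑ τ : Equiv.Perm (Fin d), f i * g j * (c τ * τ.permMatrix ℝ i j) =
        ∑ τ : Equiv.Perm (Fin d), c τ * (f i * g (τ i)) := by
      intro i
      rw [Finset.sum_comm]
      refine Finset.sum_congr rfl fun τ _ => ?_
      rw [Finset.sum_eq_single (τ i)]
      · simp [Equiv.Perm.permMatrix, PEquiv.toMatrix_apply, Equiv.toPEquiv_apply]; ring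
      · intro j _ hj
        simp [Equiv.Perm.permMatrix, PEquiv.toMatrix_apply, Equiv.toPEquiv_apply, hj.symm]
      · simp
    simp only [this]
    rw [Finset.sum_comm]
  rw [e]
  calc _ ≤ ∑ τ : Equiv.Perm (Fin d), c τ * ∑ i, f i * g i :=
        Finset.sum_le_sum fun τ _ => mul_le_mul_of_nonneg_left h.sum_mul_comp_perm_le_sum_mul (hc0 τ)
    _ = _ := by rw [← Finset.sum_mul, hc1, one_mul]

lemma ds_le_rev {f g : Fin d → ℝ} (hf : Antitone f) (hg : Monotone g)
    {w : Matrix (Fin d) (Fin d) ℝ} (hw : w ∈ doublyStochastic ℝ (Fin d)) :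
    ∑ i, ∑ j, f i * g j * w i j ≤ ∑ i, f i * g i.rev := by
  have hw' : w.submatrix id Fin.revPerm ∈ doublyStochastic ℝ (Fin d) := by
    have := reindex_mem_doublyStochastic (e₁ := Equiv.refl _) (e₂ := Fin.revPerm) hw
    simpa [Matrix.reindex_apply] using this
  have hm : Monovary f (fun i => g i.rev) := by
    have : Antitone fun i : Fin d => g i.rev := fun i j hij => hg (Fin.rev_le_rev.2 hij)
    exact hf.monovary this
  have := ds_le hm hw'
  refine le_trans (le_of_eq ?_) this
  refine Finset.sum_congr rfl fun i _ => ?_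
  rw [← Equiv.sum_comp Fin.revPerm]
  rfl

lemma ds_ge {f g : Fin d → ℝ} (hf : Antitone f) (hg : Monotone g)
    {w : Matrix (Fin d) (Fin d) ℝ} (hw : w ∈ doublyStochastic ℝ (Fin d)) :
    ∑ i, f i * g i ≤ ∑ i, ∑ j, f i * g j * w i j := by
  have hm : Monovary f (fun i => - g i) := hf.monovary hg.neg
  have := ds_le hm hw
  simp only [mul_neg, neg_mul, Finset.sum_neg_distrib] at this
  linarith

lemma dg_perm (U : Matrix (Fin d) (Fin d) ℂ) (a : Fin d → ℝ) (e : Equiv.Perm (Fin d)) :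
    dg (U.submatrix id e) (fun i => a (e i)) = dg U a := by
  ext i j
  simp only [dg, Matrix.mul_apply (N := star _), Matrix.mul_diagonal, Matrix.star_apply,
    Matrix.submatrix_apply, id]
  exact Equiv.sum_comp e (fun k => U i k * (a k : ℂ) * star (U j k))

lemma submatrix_ug {U : Matrix (Fin d) (Fin d) ℂ} (hU : U ∈ UG d) (e : Equiv.Perm (Fin d)) :
    U.submatrix id e ∈ UG d := by
  rw [Matrix.mem_unitaryGroup_iff, ← ug_right hU]
  ext i j
  simp only [Matrix.mul_apply, Matrix.star_apply, Matrix.submatrix_apply, id]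
  exact Equiv.sum_comp e (fun k => U i k * star (U j k))

lemma eigDown_dg {A : Matrix (Fin d) (Fin d) ℂ} (hA : A.IsHermitian) :
    ∃ W ∈ UG d, A = dg W (eigDown hA) := by
  refine ⟨(hA.eigenvectorUnitary : Matrix (Fin d) (Fin d) ℂ).submatrix id
    (Fin.revPerm.trans (Tuple.sort hA.eigenvalues)), submatrix_ug hA.eigenvectorUnitary.2 _, ?_⟩
  have := dg_perm (hA.eigenvectorUnitary : Matrix (Fin d) (Fin d) ℂ) hA.eigenvalues
    (Fin.revPerm.trans (Tuple.sort hA.eigenvalues))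
  rw [← exists_dg hA] at this
  exact this.symm

lemma eigDown_anti {A : Matrix (Fin d) (Fin d) ℂ} (hA : A.IsHermitian) : Antitone (eigDown hA) :=
  fun _ _ hij => Tuple.monotone_sort hA.eigenvalues (Fin.rev_le_rev.2 hij)

lemma eigDown_pos {A : Matrix (Fin d) (Fin d) ℂ} (hA : A.PosDef) (i : Fin d) :
    0 < eigDown hA.1 i := hA.eigenvalues_pos _

lemma eigUp_eq {A : Matrix (Fin d) (Fin d) ℂ} (hA : A.IsHermitian) (i : Fin d) :
    eigUp hA i = eigDown hA i.rev := by
  simp [eigUp, eigDown, sortDown]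

lemma trace_conj {N : Matrix (Fin d) (Fin d) ℂ} (hN : N ∈ UG d) (M : Matrix (Fin d) (Fin d) ℂ) :
    (N * M * star N).trace = M.trace := by
  rw [Matrix.trace_mul_comm, ← mul_assoc, ug_left hN, one_mul]

lemma Faz_eq {W N : Matrix (Fin d) (Fin d) ℂ} (hW : W ∈ UG d) (hN : N ∈ UG d) (p q : Fin d → ℝ)
    (α z : ℝ) : Faz (dg W p) (dg N q) α z =
      GG (fun i => q i ^ ((1 - α) / (2 * z))) (fun i => p i ^ (α / z)) z (star N * W) ^ (1 / α) := by
  unfold Faz GG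
  rw [mpow_dg hW, mpow_dg hN]
  generalize (fun i => q i ^ ((1 - α) / (2 * z))) = s
  generalize (fun i => p i ^ (α / z)) = a
  have e : dg N s * dg W a * dg N s = N * XX s a (star N * W) * star N := by
    have h1 : dg N s = N * dg 1 s * star N := by rw [dg_conj, mul_one]
    have h2 : dg (star N * W) a = star N * dg W a * N := by
      rw [← dg_conj, star_star]
    rw [h1, XX, h2]
    simp only [mul_assoc]
  rw [e, mpow_conj hN (XX_herm _ _ _), trace_conj hN]

/-- the reversal permutation matrix -/
noncomputable def RR (d : ℕ) : Matrix (Fin d) (Fin d) ℂ :=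
  (1 : Matrix (Fin d) (Fin d) ℂ).submatrix id Fin.revPerm

lemma RR_star : star (RR d) = RR d := by
  ext i j
  simp only [RR, Matrix.star_apply, Matrix.submatrix_apply, id, Matrix.one_apply, Fin.revPerm_apply]
  have : j = i.rev ↔ i = j.rev := by
    constructor <;> (rintro rfl; simp)
  by_cases h : i = j.rev
  · simp [h]
  · simp [h, this]

lemma RR_mem : RR d ∈ UG d := submatrix_ug (one_mem _) _

lemma RR_sq : RR d * RR d = 1 := by
  have := ug_right (RR_mem (d := d))
  rwa [RR_star] at this

lemma RR_dg (a : Fin d → ℝ) : dg (RR d) a = dg 1 (fun i => a i.rev) := by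
  have := dg_perm (1 : Matrix (Fin d) (Fin d) ℂ) (fun i => a i.rev) Fin.revPerm
  simp only [Fin.revPerm_apply, Fin.rev_rev] at this
  exact this

lemma XX_diag (s a : Fin d → ℝ) : XX s a 1 = dg 1 (fun i => s i * a i * s i) := by
  rw [XX, dg_mul (one_mem _), dg_mul (one_mem _)]

lemma GG_diag (s a : Fin d → ℝ) (z : ℝ) : GG s a z 1 = ∑ i, (s i * a i * s i) ^ z := by
  rw [GG, XX_diag, mpow_dg (one_mem _), dg_trace (one_mem _), Complex.ofReal_re]

lemma GG_zero (s a : Fin d → ℝ) (z : ℝ) :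
    GG s a z (KK (RR d) 0) = ∑ i, (s i * a i * s i) ^ z := by
  have : KK (RR d) 0 = 1 := by simp [KK]
  rw [this, GG_diag]

lemma GG_pi (s a : Fin d → ℝ) (z : ℝ) :
    GG s a z (KK (RR d) (Real.pi / 2)) = ∑ i, (s i * a i.rev * s i) ^ z := by
  have h : dg (KK (RR d) (Real.pi / 2)) a = dg 1 (fun i => a i.rev) := by
    have h1 := dg_conj (KK (RR d) (Real.pi / 2)) 1 a
    rw [mul_one] at h1
    rw [← h1, KK_conj RR_star, ← RR_dg]
    have h2 := dg_conj (RR d) 1 a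
    rw [mul_one, RR_star] at h2
    simp [h2]
  have : XX s a (KK (RR d) (Real.pi / 2)) = XX s (fun i => a i.rev) 1 := by
    rw [XX, XX, h]
  rw [GG, this]
  exact GG_diag s (fun i => a i.rev) z

end AZ

/-- for positive definite density matrices `ρ, σ` and `(α,z)` with
`1 < α ≤ 2, α/2 ≤ z ≤ α` or `2 ≤ α, α−1 ≤ z ≤ α`, the set of values `F_{α,z}(ρ, UσU*)`
over unitaries `U` is exactly `[F_α^C(λ↓(ρ),λ↓(σ)), F_α^C(λ↓(ρ),λ↑(σ))]`. -/
theorem stmt_5 {d : ℕ} (ρ σ : Matrix (Fin d) (Fin d) ℂ)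
    (hρ : ρ.PosDef) (hσ : σ.PosDef) (hρ1 : ρ.trace = 1) (hσ1 : σ.trace = 1)
    (α z : ℝ)
    (hαz : (1 < α ∧ α ≤ 2 ∧ α / 2 ≤ z ∧ z ≤ α) ∨ (2 ≤ α ∧ α - 1 ≤ z ∧ z ≤ α)) :
    {x : ℝ | ∃ U ∈ Matrix.unitaryGroup (Fin d) ℂ, x = Faz ρ (U * σ * star U) α z}
      = Set.Icc (FazC (eigDown hρ.1) (eigDown hσ.1) α)
          (FazC (eigDown hρ.1) (eigUp hσ.1) α) := by
  have hα : 1 < α := by rcases hαz with h | h <;> linarith [h.1]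
  have hz : 0 < z := by
    rcases hαz with h | h
    · linarith [h.1, h.2.2.1]
    · linarith [h.1, h.2.1]
  have hα0 : 0 < α := by linarith
  obtain ⟨W, hW, hρd⟩ := AZ.eigDown_dg hρ.1
  obtain ⟨V, hV, hσd⟩ := AZ.eigDown_dg hσ.1
  have hpa := AZ.eigDown_anti hρ.1
  have hqa := AZ.eigDown_anti hσ.1
  have hp0 := AZ.eigDown_pos hρ
  have hq0 := AZ.eigDown_pos hσ
  have hup : eigUp hσ.1 = fun i => eigDown hσ.1 i.rev := funext fun i => AZ.eigUp_eq hσ.1 i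
  rw [hup]
  generalize eigDown hρ.1 = p at *
  generalize eigDown hσ.1 = q at *
  set s : Fin d → ℝ := fun i => q i ^ ((1 - α) / (2 * z)) with hs
  set a : Fin d → ℝ := fun i => p i ^ (α / z) with ha
  have hs0 : ∀ i, 0 < s i := fun i => Real.rpow_pos_of_pos (hq0 i) _
  have ha0 : ∀ i, 0 < a i := fun i => Real.rpow_pos_of_pos (hp0 i) _
  have haz : ∀ i, a i ^ z = p i ^ α := by
    intro i
    rw [ha]
    simp only
    rw [← Real.rpow_mul (hp0 i).le, div_mul_cancel₀ _ hz.ne']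
  have hsz : ∀ i, (s i * s i) ^ z = q i ^ (1 - α) := by
    intro i
    rw [hs]
    simp only
    rw [← Real.rpow_add (hq0 i), ← Real.rpow_mul (hq0 i).le]
    congr 1
    field_simp
    ring
  have hf : Antitone fun i => p i ^ α := fun i j hij =>
    Real.rpow_le_rpow (hp0 j).le (hpa hij) hα0.le
  have hg : Monotone fun i => q i ^ (1 - α) := fun i j hij =>
    Real.rpow_le_rpow_of_nonpos (hq0 j) (hqa hij) (by linarith)
  have hsas : ∀ i j, (s i * a j * s i) ^ z = p j ^ α * q i ^ (1 - α) := by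
    intro i j
    have e : s i * a j * s i = a j * (s i * s i) := by ring
    rw [e, Real.mul_rpow (ha0 j).le (mul_pos (hs0 i) (hs0 i)).le, haz, hsz]
  set lo : ℝ := ∑ i, p i ^ α * q i ^ (1 - α) with hlo
  set hi : ℝ := ∑ i, p i ^ α * q i.rev ^ (1 - α) with hhi
  have hlo0 : 0 ≤ lo := Finset.sum_nonneg fun i _ =>
    mul_nonneg (Real.rpow_nonneg (hp0 i).le _) (Real.rpow_nonneg (hq0 i).le _)
  have hbound : ∀ T ∈ Matrix.unitaryGroup (Fin d) ℂ, lo ≤ AZ.GG s a z T ∧ AZ.GG s a z T ≤ hi := by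
    intro T hT
    refine AZ.GG_bound hs0 ha0 hz (fun w hw => ?_) hT
    simp only [haz, hsz]
    exact ⟨AZ.ds_ge hf hg hw, AZ.ds_le_rev hf hg hw⟩
  have hFaz : ∀ U ∈ Matrix.unitaryGroup (Fin d) ℂ, Faz ρ (U * σ * star U) α z =
      AZ.GG s a z (star (U * V) * W) ^ (1 / α) := by
    intro U hU
    rw [hρd, hσd, AZ.dg_conj, AZ.Faz_eq hW (mul_mem hU hV)]
  ext x
  simp only [Set.mem_ofPred_eq, Set.mem_Icc]
  have hFlo : FazC p q α = lo ^ (1 / α) := rfl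
  have hFhi : FazC p (fun i => q i.rev) α = hi ^ (1 / α) := rfl
  rw [hFlo, hFhi]
  constructor
  · rintro ⟨U, hU, rfl⟩
    rw [hFaz U hU]
    obtain ⟨h1, h2⟩ := hbound _ (mul_mem (AZ.ug_star (mul_mem hU hV)) hW)
    exact ⟨Real.rpow_le_rpow hlo0 h1 (by positivity),
      Real.rpow_le_rpow (hlo0.trans h1) h2 (by positivity)⟩
  · rintro ⟨h1, h2⟩
    have hx0 : 0 ≤ x := (Real.rpow_nonneg hlo0 _).trans h1
    have hhi0 : 0 ≤ hi := Finset.sum_nonneg fun i _ =>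
      mul_nonneg (Real.rpow_nonneg (hp0 i).le _) (Real.rpow_nonneg (hq0 i.rev).le _)
    have hxlo : lo ≤ x ^ α := by
      have := Real.rpow_le_rpow (Real.rpow_nonneg hlo0 _) h1 hα0.le
      rwa [← Real.rpow_mul hlo0, one_div_mul_cancel hα0.ne', Real.rpow_one] at this
    have hxhi : x ^ α ≤ hi := by
      have := Real.rpow_le_rpow hx0 h2 hα0.le
      rwa [← Real.rpow_mul hhi0, one_div_mul_cancel hα0.ne', Real.rpow_one] at this
    have hpath : ∀ θ, AZ.KK (AZ.RR d) θ ∈ Matrix.unitaryGroup (Fin d) ℂ := fun θ =>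
      AZ.KK_mem AZ.RR_star AZ.RR_sq θ
    have hcont : Continuous fun θ => AZ.GG s a z (AZ.KK (AZ.RR d) θ) :=
      (AZ.GG_cont hs0 ha0 z).comp_continuous (AZ.KK_cont _) hpath
    have e0 : AZ.GG s a z (AZ.KK (AZ.RR d) 0) = lo := by
      rw [AZ.GG_zero]
      exact Finset.sum_congr rfl fun i _ => hsas i i
    have e1 : AZ.GG s a z (AZ.KK (AZ.RR d) (Real.pi / 2)) = hi := by
      rw [AZ.GG_pi, hhi, ← Equiv.sum_comp Fin.revPerm]
      refine Finset.sum_congr rfl fun i _ => ?_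
      rw [hsas, Fin.revPerm_apply, Fin.rev_rev]
    have hivt := intermediate_value_Icc (a := 0) (b := Real.pi / 2) (by positivity)
      hcont.continuousOn
    simp only [e0, e1] at hivt
    obtain ⟨θ, -, hθ⟩ := hivt ⟨hxlo, hxhi⟩
    set T := AZ.KK (AZ.RR d) θ with hTd
    have hT : T ∈ Matrix.unitaryGroup (Fin d) ℂ := hpath θ
    refine ⟨W * star T * star V, mul_mem (mul_mem hW (AZ.ug_star hT)) (AZ.ug_star hV), ?_⟩
    rw [hFaz _ (mul_mem (mul_mem hW (AZ.ug_star hT)) (AZ.ug_star hV))]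
    have e : star (W * star T * star V * V) * W = T := by
      rw [mul_assoc _ (star V) V, AZ.ug_left hV, mul_one, star_mul, star_star, mul_assoc,
        AZ.ug_left hW, mul_one]
    simp only at hθ
    rw [e, hθ, ← Real.rpow_mul hx0, mul_one_div_cancel hα0.ne', Real.rpow_one]
end

section
/- Let ρ and σ be positive definite d×d density matrices, and let α ∈ (0,1) and z ∈ (0,1). Then the set { F_{α,z}(ρ, UσU*) : U a d×d unitary matrix } is exactly the closed interval [F_α^C(λ↓(ρ), λ↑(σ)), F_α^C(λ↓(ρ), λ↓(σ))]. -/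
open Matrix
open scoped ComplexOrder

section Aux
open scoped Matrix.Norms.L2Operator MatrixOrder

/-- A real diagonal matrix, as a complex matrix. -/
noncomputable def dg {d : ℕ} (a : Fin d → ℝ) : Matrix (Fin d) (Fin d) ℂ :=
  Matrix.diagonal (fun i => (a i : ℂ))

lemma dg_mul {d : ℕ} (a b : Fin d → ℝ) : dg a * dg b = dg (fun i => a i * b i) := by
  simp [dg, Matrix.diagonal_mul_diagonal]

lemma star_dg {d : ℕ} (a : Fin d → ℝ) : star (dg a) = dg a := by
  rw [dg, Matrix.star_eq_conjTranspose, Matrix.diagonal_conjTranspose]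
  congr 1; ext i; simp

lemma herm_conj_dg {d : ℕ} (V : Matrix (Fin d) (Fin d) ℂ) (a : Fin d → ℝ) :
    (V * dg a * star V).IsHermitian := by
  change star _ = _
  simp [star_dg, mul_assoc]

lemma spec_herm {d : ℕ} {A : Matrix (Fin d) (Fin d) ℂ} (hA : A.IsHermitian) :
    A = (hA.eigenvectorUnitary : Matrix (Fin d) (Fin d) ℂ) * dg hA.eigenvalues *
      star (hA.eigenvectorUnitary : Matrix (Fin d) (Fin d) ℂ) := by
  exact hA.spectral_theorem

lemma mpow_conj {d : ℕ} {V : Matrix (Fin d) (Fin d) ℂ} (hV : V ∈ Matrix.unitaryGroup (Fin d) ℂ)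
    (a : Fin d → ℝ) (t : ℝ) :
    mpow (V * dg a * star V) t = V * dg (fun i => a i ^ t) * star V := by
  have hA := herm_conj_dg V a
  have hs := spec_herm hA
  have hW := hA.eigenvectorUnitary.2
  rw [mpow, dif_pos hA]
  change (hA.eigenvectorUnitary : Matrix (Fin d) (Fin d) ℂ) * dg (fun i => hA.eigenvalues i ^ t) *
    (star (hA.eigenvectorUnitary : Matrix (Fin d) (Fin d) ℂ)) = _
  set W : Matrix (Fin d) (Fin d) ℂ := hA.eigenvectorUnitary.1 with hWdef
  set e := hA.eigenvalues
  clear_value W e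
  obtain ⟨hV1, hV2⟩ := hV
  obtain ⟨hW1, hW2⟩ := hW
  have h1 : (star W * V) * dg a = dg e * (star W * V) := by
    calc (star W * V) * dg a = star W * (V * dg a * star V) * V := by
          simp only [mul_assoc, hV1, mul_one]
      _ = star W * (W * dg e * star W) * V := by rw [hs]
      _ = dg e * (star W * V) := by
          simp only [← mul_assoc, hW1, one_mul]
  have h2 : (star W * V) * dg (fun i => a i ^ t) = dg (fun i => e i ^ t) * (star W * V) := by
    ext i j
    have := congrFun (congrFun h1 i) j
    simp only [dg, Matrix.mul_diagonal, Matrix.diagonal_mul] at this ⊢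
    by_cases hq : (star W * V) i j = 0
    · simp [hq]
    · rw [mul_comm] at this
      have := mul_right_cancel₀ hq this
      have : a j = e i := by exact_mod_cast this
      rw [this, mul_comm]
  calc W * dg (fun i => e i ^ t) * star W = W * (dg (fun i => e i ^ t) * (star W * V)) * star V := by
        simp only [mul_assoc, hV2, mul_one]
    _ = W * ((star W * V) * dg (fun i => a i ^ t)) * star V := by rw [h2]
    _ = V * dg (fun i => a i ^ t) * star V := by
        simp only [← mul_assoc, hW2, one_mul]

lemma posDef_conj_dg {d : ℕ} {V : Matrix (Fin d) (Fin d) ℂ}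
    (hV : V ∈ Matrix.unitaryGroup (Fin d) ℂ)
    (a : Fin d → ℝ) (ha : ∀ i, 0 < a i) : (V * dg a * star V).PosDef := by
  have h : (dg a).PosDef := by
    rw [dg, Matrix.posDef_diagonal_iff]
    intro i; exact_mod_cast ha i
  have hu : IsUnit V := ⟨⟨V, star V, hV.2, hV.1⟩, rfl⟩
  have := (Matrix.IsUnit.posDef_star_right_conjugate_iff hu (x := dg a)).2 h
  exact this

lemma exists_spec {d : ℕ} {A : Matrix (Fin d) (Fin d) ℂ} (hA : A.PosDef) :
    ∃ V ∈ Matrix.unitaryGroup (Fin d) ℂ, ∃ a : Fin d → ℝ, (∀ i, 0 < a i) ∧ A = V * dg a * star V :=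
  ⟨_, hA.1.eigenvectorUnitary.2, _, hA.eigenvalues_pos, spec_herm hA.1⟩

lemma mpow_posDef {d : ℕ} {A : Matrix (Fin d) (Fin d) ℂ} (hA : A.PosDef) (t : ℝ) :
    (mpow A t).PosDef := by
  obtain ⟨V, hV, a, ha, rfl⟩ := exists_spec hA
  rw [mpow_conj hV]
  exact posDef_conj_dg hV _ fun i => Real.rpow_pos_of_pos (ha i) t

lemma conj_mul_conj {d : ℕ} {V : Matrix (Fin d) (Fin d) ℂ}
    (hV : V ∈ Matrix.unitaryGroup (Fin d) ℂ) (X Y : Matrix (Fin d) (Fin d) ℂ) :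
    (V * X * star V) * (V * Y * star V) = V * (X * Y) * star V := by
  calc _ = V * X * (star V * V) * Y * star V := by simp only [mul_assoc]
    _ = _ := by rw [hV.1]; simp only [mul_assoc, mul_one]

lemma mpow_add {d : ℕ} {A : Matrix (Fin d) (Fin d) ℂ} (hA : A.PosDef) (s t : ℝ) :
    mpow A s * mpow A t = mpow A (s + t) := by
  obtain ⟨V, hV, a, ha, rfl⟩ := exists_spec hA
  simp only [mpow_conj hV, conj_mul_conj hV, dg_mul]
  simp only [← Real.rpow_add (ha _)]

lemma mpow_mpow {d : ℕ} {A : Matrix (Fin d) (Fin d) ℂ} (hA : A.PosDef) (s t : ℝ) :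
    mpow (mpow A s) t = mpow A (s * t) := by
  obtain ⟨V, hV, a, ha, rfl⟩ := exists_spec hA
  simp only [mpow_conj hV]
  simp only [← Real.rpow_mul (ha _).le]

lemma mpow_one {d : ℕ} {A : Matrix (Fin d) (Fin d) ℂ} (hA : A.PosDef) : mpow A 1 = A := by
  obtain ⟨V, hV, a, ha, rfl⟩ := exists_spec hA
  simp only [mpow_conj hV, Real.rpow_one]

lemma dg_one {d : ℕ} : dg (fun _ : Fin d => (1:ℝ)) = 1 := by
  simp [dg]

lemma mpow_zero {d : ℕ} {A : Matrix (Fin d) (Fin d) ℂ} (hA : A.PosDef) : mpow A 0 = 1 := by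
  obtain ⟨V, hV, a, ha, rfl⟩ := exists_spec hA
  simp only [mpow_conj hV, Real.rpow_zero, dg_one, mul_one, hV.2]

lemma mpow_unitary {d : ℕ} {A : Matrix (Fin d) (Fin d) ℂ} (hA : A.IsHermitian)
    {U : Matrix (Fin d) (Fin d) ℂ} (hU : U ∈ Matrix.unitaryGroup (Fin d) ℂ) (t : ℝ) :
    mpow (U * A * star U) t = U * mpow A t * star U := by
  have hs := spec_herm hA
  have hV := hA.eigenvectorUnitary.2
  set V := hA.eigenvectorUnitary.1
  set a := hA.eigenvalues
  clear_value V a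
  subst hs
  rw [mpow_conj hV]
  have : ∀ x, U * (V * x * star V) * star U = (U * V) * x * star (U * V) := by
    intro x; simp only [mul_assoc, star_mul]
  rw [this, this, mpow_conj (mul_mem hU hV)]

lemma mpow_eq_rpow {d : ℕ} {A : Matrix (Fin d) (Fin d) ℂ} (hA : A.PosDef) (t : ℝ) :
    mpow A t = CFC.rpow A t := by
  rw [CFC.rpow_eq_pow, CFC.rpow_eq_cfc_real (Matrix.nonneg_iff_posSemidef.2 hA.posSemidef),
    hA.1.cfc_eq, mpow, dif_pos hA.1]
  rfl

lemma mpow_continuousOn {d : ℕ} (t : ℝ) :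
    ContinuousOn (fun A : Matrix (Fin d) (Fin d) ℂ => mpow A t) {A | A.PosDef} := by
  have h := CFC.continuousOn_rpow (A := Matrix (Fin d) (Fin d) ℂ) t
  have hsub : {A : Matrix (Fin d) (Fin d) ℂ | A.PosDef} ⊆ {a | IsStrictlyPositive a} := by
    intro A hA
    exact Matrix.isStrictlyPositive_iff_posDef.2 hA
  refine (h.mono hsub).congr ?_
  intro A hA
  exact mpow_eq_rpow hA t

lemma commute_mpow {d : ℕ} {A X : Matrix (Fin d) (Fin d) ℂ} (hA : A.PosDef) (t : ℝ)
    (h : Commute A X) : Commute (mpow A t) X := by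
  have : mpow A t = cfc (fun x : ℝ => x ^ t) A := by
    rw [hA.1.cfc_eq, mpow, dif_pos hA.1]; rfl
  rw [this]
  exact h.cfc_real _

lemma trace_formula {d : ℕ} (V W : Matrix (Fin d) (Fin d) ℂ) (x y : Fin d → ℝ) :
    ((V * dg x * star V) * (W * dg y * star W)).trace.re
      = ∑ i, ∑ j, x i * y j * ‖(star V * W) i j‖ ^ 2 := by
  have h1 : ((V * dg x * star V) * (W * dg y * star W)).trace
      = (dg x * (star V * W) * (dg y * star (star V * W))).trace := by
    rw [show (V * dg x * star V) * (W * dg y * star W)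
      = V * (dg x * star V * W * dg y * star W) by simp only [mul_assoc], Matrix.trace_mul_comm]
    congr 1
    simp only [star_mul, star_star, mul_assoc]
  rw [h1]
  set Q := star V * W
  simp only [Matrix.trace, Matrix.diag, Matrix.mul_apply (M := dg x * Q), Complex.re_sum]
  refine Finset.sum_congr rfl fun i _ => Finset.sum_congr rfl fun j _ => ?_
  rw [dg, dg, Matrix.diagonal_mul, Matrix.diagonal_mul, Matrix.star_apply]
  have : Q i j * star (Q i j) = ((‖Q i j‖ ^ 2 : ℝ) : ℂ) := by
    rw [Complex.star_def, Complex.mul_conj, Complex.normSq_eq_norm_sq]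
  rw [show (x i : ℂ) * Q i j * ((y j : ℂ) * star (Q i j)) = ((x i * y j : ℝ) : ℂ) * (Q i j * star (Q i j)) by
    push_cast; ring, this, ← Complex.ofReal_mul, Complex.ofReal_re]

lemma row_sum {d : ℕ} {Q : Matrix (Fin d) (Fin d) ℂ} (hQ : Q ∈ Matrix.unitaryGroup (Fin d) ℂ)
    (i : Fin d) : ∑ j, ‖Q i j‖ ^ 2 = 1 := by
  have h := congrFun (congrFun hQ.2 i) i
  rw [Matrix.mul_apply, Matrix.one_apply_eq] at h
  have h' := congrArg Complex.re h
  rw [Complex.re_sum] at h'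
  rw [← Complex.one_re, ← h']
  refine Finset.sum_congr rfl fun j _ => ?_
  rw [Matrix.star_apply, Complex.star_def, Complex.mul_conj, Complex.normSq_eq_norm_sq,
    Complex.ofReal_re]

lemma col_sum {d : ℕ} {Q : Matrix (Fin d) (Fin d) ℂ} (hQ : Q ∈ Matrix.unitaryGroup (Fin d) ℂ)
    (j : Fin d) : ∑ i, ‖Q i j‖ ^ 2 = 1 := by
  have h := row_sum (Q := star Q) ⟨by rw [star_star]; exact hQ.2, by rw [star_star]; exact hQ.1⟩ j
  simpa [Matrix.star_apply] using h

lemma ds_mem {d : ℕ} {Q : Matrix (Fin d) (Fin d) ℂ} (hQ : Q ∈ Matrix.unitaryGroup (Fin d) ℂ) :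
    (Matrix.of fun i j => ‖Q i j‖ ^ 2) ∈ doublyStochastic ℝ (Fin d) := by
  rw [mem_doublyStochastic_iff_sum]
  exact ⟨fun i j => by simp, fun i => by simpa using row_sum hQ i, fun j => by simpa using col_sum hQ j⟩

lemma ds_sum {d : ℕ} {D : Matrix (Fin d) (Fin d) ℝ} (hD : D ∈ doublyStochastic ℝ (Fin d))
    (x y : Fin d → ℝ) : ∃ w : Equiv.Perm (Fin d) → ℝ, (∀ p, 0 ≤ w p) ∧ ∑ p, w p = 1 ∧
      ∑ i, ∑ j, x i * y j * D i j = ∑ p, w p * ∑ i, x i * y (p i) := by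
  obtain ⟨w, hw, hw1, rfl⟩ := exists_eq_sum_perm_of_mem_doublyStochastic hD
  refine ⟨w, hw, hw1, ?_⟩
  simp only [Matrix.sum_apply, Matrix.smul_apply, Equiv.Perm.permMatrix, PEquiv.toMatrix_apply,
    Finset.mul_sum, smul_eq_mul]
  rw [Finset.sum_congr rfl fun i _ => Finset.sum_comm, Finset.sum_comm]
  refine Finset.sum_congr rfl fun p _ => Finset.sum_congr rfl fun i _ => ?_
  simp [Equiv.toPEquiv_apply]
  try ring

lemma ds_upper {d : ℕ} {D : Matrix (Fin d) (Fin d) ℝ} (hD : D ∈ doublyStochastic ℝ (Fin d))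
    (x y : Fin d → ℝ) (s r : Equiv.Perm (Fin d)) (h : Monovary (x ∘ s) (y ∘ r)) :
    ∑ i, ∑ j, x i * y j * D i j ≤ ∑ i, x (s i) * y (r i) := by
  obtain ⟨w, hw, hw1, he⟩ := ds_sum hD x y
  rw [he, ← one_mul (∑ i, x (s i) * y (r i)), ← hw1, Finset.sum_mul]
  refine Finset.sum_le_sum fun p _ => mul_le_mul_of_nonneg_left ?_ (hw p)
  have := h.sum_mul_comp_perm_le_sum_mul (σ := (s.trans p).trans r.symm)
  simp only [Function.comp_apply, Equiv.trans_apply, Equiv.apply_symm_apply] at this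
  rw [← Equiv.sum_comp s]
  exact this

lemma ds_lower {d : ℕ} {D : Matrix (Fin d) (Fin d) ℝ} (hD : D ∈ doublyStochastic ℝ (Fin d))
    (x y : Fin d → ℝ) (s r : Equiv.Perm (Fin d)) (h : Antivary (x ∘ s) (y ∘ r)) :
    ∑ i, x (s i) * y (r i) ≤ ∑ i, ∑ j, x i * y j * D i j := by
  obtain ⟨w, hw, hw1, he⟩ := ds_sum hD x y
  rw [he, ← one_mul (∑ i, x (s i) * y (r i)), ← hw1, Finset.sum_mul]
  refine Finset.sum_le_sum fun p _ => mul_le_mul_of_nonneg_left ?_ (hw p)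
  have := h.sum_mul_le_sum_mul_comp_perm (σ := (s.trans p).trans r.symm)
  simp only [Function.comp_apply, Equiv.trans_apply, Equiv.apply_symm_apply] at this
  rw [← Equiv.sum_comp s (fun i => x i * y (p i))]
  exact this

lemma scalar_klein {m n z : ℝ} (hm : 0 < m) (hn : 0 < n) (hz : z ∈ Set.Ioo (0:ℝ) 1) :
    m ^ z ≤ (1 - z) * n ^ z + z * (m * n ^ (z - 1)) := by
  have h := Real.geom_mean_le_arith_mean2_weighted hz.1.le (by linarith [hz.2] : 0 ≤ 1 - z)
    hm.le hn.le (by ring)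
  have h2 := mul_le_mul_of_nonneg_right h (Real.rpow_pos_of_pos hn (z - 1)).le
  rw [mul_assoc, ← Real.rpow_add hn] at h2
  have h3 : n * n ^ (z - 1) = n ^ z := by
    rw [← Real.rpow_one_add' hn.le (by simpa using hz.1.ne')]; ring_nf
  rw [show (1 - z + (z - 1)) = 0 by ring, Real.rpow_zero, mul_one] at h2
  rw [← h3]
  linarith

lemma trace_conj {d : ℕ} {U : Matrix (Fin d) (Fin d) ℂ} (hU : U ∈ Matrix.unitaryGroup (Fin d) ℂ)
    (X : Matrix (Fin d) (Fin d) ℂ) : (U * X * star U).trace = X.trace := by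
  rw [Matrix.trace_mul_comm, ← mul_assoc, hU.1, one_mul]

/-- The Klein inequality for the concave function `x ^ z`. -/
lemma klein {d : ℕ} {M N : Matrix (Fin d) (Fin d) ℂ} (hM : M.PosDef) (hN : N.PosDef) {z : ℝ}
    (hz : z ∈ Set.Ioo (0:ℝ) 1) :
    (mpow M z).trace.re - (mpow N z).trace.re ≤ z * (mpow N (z - 1) * (M - N)).trace.re := by
  have e1 : mpow N (z - 1) * N = mpow N z := by
    conv_lhs => rw [← mpow_one hN, mpow_mpow hN, mpow_add hN]
    ring_nf
  rw [mul_sub, e1, Matrix.trace_sub, Complex.sub_re, Matrix.trace_mul_comm]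
  suffices h : (mpow M z * mpow N 0).trace.re ≤
      (1 - z) * (mpow M 0 * mpow N z).trace.re + z * (mpow M 1 * mpow N (z-1)).trace.re by
    rw [mpow_zero hM, mpow_zero hN, mpow_one hM, mul_one, one_mul] at h
    linarith
  clear e1
  obtain ⟨V, hV, m, hm, rfl⟩ := exists_spec hM
  obtain ⟨W, hW, n, hn, rfl⟩ := exists_spec hN
  simp only [mpow_conj hV, mpow_conj hW, trace_formula, Finset.mul_sum, ← Finset.sum_add_distrib]
  refine Finset.sum_le_sum fun i _ => Finset.sum_le_sum fun j _ => ?_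
  have := scalar_klein (hm i) (hn j) hz
  have := mul_le_mul_of_nonneg_right this (sq_nonneg ‖(star V * W) i j‖)
  simp only [Real.rpow_zero, Real.rpow_one, mul_one, one_mul]
  linarith

/-- The real part of the trace as a continuous real-linear functional. -/
noncomputable def trL (d : ℕ) : Matrix (Fin d) (Fin d) ℂ →L[ℝ] ℝ :=
  LinearMap.toContinuousLinearMap
    (Complex.reLm.comp ((Matrix.traceLinearMap (Fin d) ℂ ℂ).restrictScalars ℝ))

lemma trL_apply {d : ℕ} (X : Matrix (Fin d) (Fin d) ℂ) : trL d X = X.trace.re := rfl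

lemma posDef_sandwich {d : ℕ} {S X : Matrix (Fin d) (Fin d) ℂ} (hS : S.PosDef) (hX : X.PosDef) :
    (S * X * S).PosDef := by
  have h := (Matrix.IsUnit.posDef_star_right_conjugate_iff hS.isUnit (x := X)).2 hX
  rwa [show star S = S from hS.1] at h

lemma posDef_unitary {d : ℕ} {U X : Matrix (Fin d) (Fin d) ℂ}
    (hU : U ∈ Matrix.unitaryGroup (Fin d) ℂ) (hX : X.PosDef) :
    (U * X * star U).PosDef := by
  have hu : IsUnit U := ⟨⟨U, star U, hU.2, hU.1⟩, rfl⟩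
  exact (Matrix.IsUnit.posDef_star_right_conjugate_iff hu (x := X)).2 hX

lemma deriv_mul_vanish {d : ℕ} {c g : ℝ → Matrix (Fin d) (Fin d) ℂ}
    {g' : Matrix (Fin d) (Fin d) ℂ} (hc : ContinuousAt c 0) (hg : HasDerivAt g g' 0)
    (h0 : g 0 = 0) : HasDerivAt (fun t => c t * g t) (c 0 * g') 0 := by
  rw [hasDerivAt_iff_tendsto_slope_zero] at hg ⊢
  have hc' : Filter.Tendsto c (nhdsWithin 0 {0}ᶜ) (nhds (c 0)) :=
    hc.tendsto.mono_left nhdsWithin_le_nhds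
  refine (hc'.mul hg).congr fun t => ?_
  simp [h0]

lemma crit_curve {d : ℕ} {A K : Matrix (Fin d) (Fin d) ℂ} (hK : star K = -K) :
    ∃ W : ℝ → Matrix (Fin d) (Fin d) ℂ, (∀ t, W t ∈ Matrix.unitaryGroup (Fin d) ℂ) ∧ W 0 = 1 ∧
      HasDerivAt (fun t => W t * A * star (W t)) (K * A - A * K) 0 := by
  have hst : ∀ t : ℝ, star (NormedSpace.exp (t • K)) = NormedSpace.exp (t • (-K)) := by
    intro t
    rw [NormedSpace.star_exp, star_smul, hK]; simp
  refine ⟨fun t => NormedSpace.exp (t • K), fun t => ?_, by simp, ?_⟩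
  · rw [Matrix.mem_unitaryGroup_iff, hst, smul_neg,
      ← Matrix.exp_add_of_commute _ _ ((Commute.refl (t • K)).neg_right)]
    simp
  · have h1 := hasDerivAt_exp_smul_const (𝕂 := ℝ) K (0:ℝ)
    have h2 := hasDerivAt_exp_smul_const (𝕂 := ℝ) (-K) (0:ℝ)
    simp only [hst]
    have := (h1.mul_const A).mul h2
    simp only [zero_smul, NormedSpace.exp_zero, one_mul, mul_one, mul_neg, ← sub_eq_add_neg] at this
    exact this

lemma crit_deriv {d : ℕ} {A S K : Matrix (Fin d) (Fin d) ℂ} (hA : A.PosDef) (hS : S.PosDef)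
    {z : ℝ} (hz : z ∈ Set.Ioo (0:ℝ) 1) (hK : star K = -K)
    (h : (∀ W ∈ Matrix.unitaryGroup (Fin d) ℂ, (mpow (S * A * S) z).trace.re ≤
            (mpow (S * (W * A * star W) * S) z).trace.re) ∨
         (∀ W ∈ Matrix.unitaryGroup (Fin d) ℂ, (mpow (S * (W * A * star W) * S) z).trace.re ≤
            (mpow (S * A * S) z).trace.re)) :
    (mpow (S * A * S) (z - 1) * (S * (K * A - A * K) * S)).trace.re = 0 := by
  obtain ⟨W, hW, hW0, hd⟩ := crit_curve (A := A) hK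
  have hpd : ∀ t, (S * (W t * A * star (W t)) * S).PosDef := fun t =>
    posDef_sandwich hS (posDef_unitary (hW t) hA)
  have hN0 : S * (W 0 * A * star (W 0)) * S = S * A * S := by simp [hW0]
  have hd2 : HasDerivAt (fun t => S * (W t * A * star (W t)) * S) (S * (K * A - A * K) * S) 0 :=
    (hd.const_mul S).mul_const S
  set N : ℝ → Matrix (Fin d) (Fin d) ℂ := fun t => S * (W t * A * star (W t)) * S with hN
  have hNpd : ∀ t, (N t).PosDef := hpd
  have hN00 : N 0 = S * A * S := hN0
  have hd3 := hd2.sub_const (S * A * S)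
  rw [← hN00] at h hd3 ⊢
  rcases h with h | h
  · have hg := ((trL d).hasFDerivAt.comp_hasDerivAt (0:ℝ) (hd3.const_mul (mpow (N 0) (z - 1))))
    refine IsLocalMin.hasDerivAt_eq_zero (f := fun t => trL d (mpow (N 0) (z - 1) * (N t - N 0))) ?_ hg
    refine Filter.Eventually.of_forall fun t => ?_
    have := klein (hNpd t) (hNpd 0) hz
    have h' := h _ (hW t)
    simp only [trL_apply, sub_self, mul_zero, Matrix.trace_zero, Complex.zero_re]
    have hz0 := hz.1
    by_contra hneg
    push Not at hneg
    have := mul_neg_of_pos_of_neg hz0 hneg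
    linarith
  · have hc : ContinuousAt (fun t => mpow (N t) (z - 1)) 0 := by
      have hcw := (mpow_continuousOn (d := d) (z - 1)) (N 0) (hNpd 0)
      have := hcw.tendsto.comp (tendsto_nhdsWithin_iff.2 ⟨hd2.continuousAt.tendsto,
        Filter.Eventually.of_forall hNpd⟩)
      exact this
    have hk := deriv_mul_vanish hc hd3 (by simp)
    have hg := ((trL d).hasFDerivAt.comp_hasDerivAt (0:ℝ) hk)
    refine IsLocalMax.hasDerivAt_eq_zero (f := fun t => trL d (mpow (N t) (z - 1) * (N t - N 0))) ?_ hg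
    refine Filter.Eventually.of_forall fun t => ?_
    have := klein (hNpd 0) (hNpd t) hz
    have h' := h _ (hW t)
    rw [← neg_sub (N t), mul_neg, Matrix.trace_neg, Complex.neg_re] at this
    simp only [trL_apply, sub_self, mul_zero, Matrix.trace_zero, Complex.zero_re]
    have hz0 := hz.1
    by_contra hneg
    push Not at hneg
    have := mul_pos hz0 hneg
    linarith

lemma crit_commute {d : ℕ} {A S : Matrix (Fin d) (Fin d) ℂ} (hA : A.PosDef) (hS : S.PosDef)
    {z : ℝ} (hz : z ∈ Set.Ioo (0:ℝ) 1)
    (h : (∀ W ∈ Matrix.unitaryGroup (Fin d) ℂ, (mpow (S * A * S) z).trace.re ≤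
            (mpow (S * (W * A * star W) * S) z).trace.re) ∨
         (∀ W ∈ Matrix.unitaryGroup (Fin d) ℂ, (mpow (S * (W * A * star W) * S) z).trace.re ≤
            (mpow (S * A * S) z).trace.re)) : Commute A S := by
  have hN := posDef_sandwich hS hA
  have hP := mpow_posDef hN (z - 1)
  have sA : star A = A := hA.1
  have sS : star S = S := hS.1
  have sP : star (mpow (S * A * S) (z-1)) = mpow (S * A * S) (z-1) := hP.1
  set P := mpow (S * A * S) (z-1) with hPdef
  set K := A * (S * P * S) - (S * P * S) * A with hKdef
  have hK : star K = -K := by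
    simp only [hKdef, star_sub, star_mul, sA, sS, sP, neg_sub, mul_assoc]
  have h0 := crit_deriv hA hS hz hK h
  have h1 : (P * (S * (K * A - A * K) * S)).trace = - (star K * K).trace := by
    rw [hK, neg_mul, Matrix.trace_neg, neg_neg]
    have e1 : (P * (S * (K * A - A * K) * S)).trace = ((S * P * S) * (K * A - A * K)).trace := by
      rw [show P * (S * (K * A - A * K) * S) = (P * S * (K * A - A * K)) * S by
        simp only [mul_assoc], Matrix.trace_mul_comm]
      simp only [mul_assoc]
    rw [e1, mul_sub, Matrix.trace_sub]
    have e2 : ((S * P * S) * (K * A)).trace = (A * (S * P * S) * K).trace := by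
      rw [← mul_assoc, Matrix.trace_mul_comm, ← mul_assoc]
    rw [e2, ← mul_assoc (S * P * S), ← Matrix.trace_sub, ← sub_mul]
  have hK0 : K = 0 := by
    rw [← hPdef, h1, Complex.neg_re, neg_eq_zero] at h0
    have hps : (star K * K).PosSemidef := Matrix.posSemidef_conjTranspose_mul_self K
    have him : 0 ≤ (star K * K).trace := hps.trace_nonneg
    have : (star K * K).trace = 0 := by
      apply Complex.ext
      · exact h0
      · exact (Complex.le_def.1 him).2.symm
    exact Matrix.trace_conjTranspose_mul_self_eq_zero_iff.1 this
  have hcomm : A * (S * P * S) = (S * P * S) * A := sub_eq_zero.1 hK0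
  have hNP : (S * A * S) * P = mpow (S * A * S) z := by
    conv_lhs => rw [hPdef]
    nth_rw 1 [← mpow_one hN]
    rw [mpow_add hN]
    ring_nf
  have hPN : P * (S * A * S) = mpow (S * A * S) z := by
    conv_lhs => rw [hPdef]
    nth_rw 2 [← mpow_one hN]
    rw [mpow_add hN]
    ring_nf
  have c1 : Commute (mpow (S * A * S) z) (S * S) := by
    change _ * _ = _ * _
    calc mpow (S * A * S) z * (S * S) = S * (A * (S * P * S)) * S := by
          rw [← hNP]; simp only [mul_assoc]
      _ = S * ((S * P * S) * A) * S := by rw [hcomm]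
      _ = (S * S) * mpow (S * A * S) z := by
          rw [← hPN]; simp only [mul_assoc]
  have c2 : Commute (S * A * S) (S * S) := by
    have := commute_mpow (mpow_posDef hN z) (1 / z) c1
    rwa [mpow_mpow hN, mul_one_div_cancel hz.1.ne', mpow_one hN] at this
  have hSS : S * S = mpow S 2 := by
    conv_lhs => rw [← mpow_one hS, mpow_add hS]
    norm_num
  have c3 : Commute S (S * A * S) := by
    rw [hSS] at c2
    have := commute_mpow (mpow_posDef hS 2) (1 / 2) c2.symm
    rwa [mpow_mpow hS, show (2:ℝ) * (1/2) = 1 by norm_num, mpow_one hS] at this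
  have hu := hS.isUnit
  have c4 : S * (S * A) * S = S * (A * S) * S := by
    have := c3.eq
    simpa only [mul_assoc] using this
  exact (hu.mul_left_cancel (hu.mul_right_cancel c4)).symm

lemma exp_conj_dg {d : ℕ} {V : Matrix (Fin d) (Fin d) ℂ} (hV : V ∈ Matrix.unitaryGroup (Fin d) ℂ)
    (a : Fin d → ℝ) :
    NormedSpace.exp (V * dg a * star V) = V * dg (fun i => Real.exp (a i)) * star V := by
  have := Matrix.exp_units_conj (⟨V, star V, hV.2, hV.1⟩ : (Matrix (Fin d) (Fin d) ℂ)ˣ) (dg a)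
  change NormedSpace.exp (V * dg a * star V) = V * NormedSpace.exp (dg a) * star V at this
  rw [this, dg, Matrix.exp_diagonal, dg]
  congr 3
  ext i
  simp [Pi.coe_exp, ← Complex.exp_eq_exp_ℂ]

lemma mpow_exp {d : ℕ} {X : Matrix (Fin d) (Fin d) ℂ} (hX : X.IsHermitian) (t : ℝ) :
    mpow (NormedSpace.exp X) t = NormedSpace.exp (t • X) := by
  have hs := spec_herm hX
  have hV := hX.eigenvectorUnitary.2
  set V := hX.eigenvectorUnitary.1
  set a := hX.eigenvalues
  clear_value V a
  subst hs
  rw [exp_conj_dg hV, mpow_conj hV]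
  have : t • (V * dg a * star V) = V * dg (fun i => a i * t) * star V := by
    rw [← smul_mul_assoc, ← mul_smul_comm]
    congr 2
    simp only [dg, ← Matrix.diagonal_smul]
    congr 1
    ext i
    simp [mul_comm]
  rw [this, exp_conj_dg hV]
  simp only [Real.exp_mul]

lemma mpow_mul_commute {d : ℕ} {A B : Matrix (Fin d) (Fin d) ℂ} (hA : A.PosDef) (hB : B.PosDef)
    (h : Commute A B) (t : ℝ) : mpow (A * B) t = mpow A t * mpow B t := by
  have hA' := CFC.exp_log A (Matrix.isStrictlyPositive_iff_posDef.2 hA)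
  have hB' := CFC.exp_log B (Matrix.isStrictlyPositive_iff_posDef.2 hB)
  have hla : (CFC.log A).IsHermitian := IsSelfAdjoint.log
  have hlb : (CFC.log B).IsHermitian := IsSelfAdjoint.log
  have hc : Commute (CFC.log A) (CFC.log B) := ((h.cfc_real _).symm.cfc_real _).symm
  set a := CFC.log A
  set b := CFC.log B
  rw [← hA', ← hB', ← Matrix.exp_add_of_commute _ _ hc, mpow_exp hla, mpow_exp hlb,
    mpow_exp (hla.add hlb), smul_add,
    Matrix.exp_add_of_commute _ _ ((hc.smul_left t).smul_right t)]

lemma crit_value {d : ℕ} {A S : Matrix (Fin d) (Fin d) ℂ} (hA : A.PosDef) (hS : S.PosDef)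
    (h : Commute A S) (z : ℝ) : mpow (S * A * S) z = mpow A z * mpow S (2 * z) := by
  have hSS : S * S = mpow S 2 := by
    conv_lhs => rw [← mpow_one hS, mpow_add hS]
    norm_num
  rw [← h.eq, mul_assoc, hSS, mpow_mul_commute hA (mpow_posDef hS 2), mpow_mpow hS]
  exact (commute_mpow hS 2 h.symm).symm

lemma isCompact_unitaryGroup (d : ℕ) :
    IsCompact {U : Matrix (Fin d) (Fin d) ℂ | U ∈ Matrix.unitaryGroup (Fin d) ℂ} := by
  haveI : ProperSpace (Matrix (Fin d) (Fin d) ℂ) := FiniteDimensional.proper ℂ _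
  refine Metric.isCompact_of_isClosed_isBounded ?_ ?_
  · have : {U : Matrix (Fin d) (Fin d) ℂ | U ∈ Matrix.unitaryGroup (Fin d) ℂ}
        = {U | U * star U = 1} := by
      ext U; exact Matrix.mem_unitaryGroup_iff
    rw [this]
    exact isClosed_eq (by fun_prop) continuous_const
  · rw [isBounded_iff_forall_norm_le]
    refine ⟨‖(1 : Matrix (Fin d) (Fin d) ℂ)‖ + 1, fun U hU => ?_⟩
    have h := CStarRing.norm_star_mul_self (x := U)
    rw [hU.1] at h
    nlinarith [norm_nonneg U, norm_nonneg (1 : Matrix (Fin d) (Fin d) ℂ)]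

lemma joined_one (d : ℕ) (u : unitary (Matrix (Fin d) (Fin d) ℂ)) : Joined 1 u := by
  have hfin : (spectrum ℂ (u : Matrix (Fin d) (Fin d) ℂ)).Finite := Matrix.finite_spectrum _
  have hinf : ((fun θ : ℝ => -(Circle.exp θ : ℂ)) '' Set.Ioo 0 1).Infinite := by
    refine Set.Infinite.image ?_ (Set.Ioo_infinite zero_lt_one)
    intro x hx y hy hxy
    have h : (Circle.exp x : ℂ) = Circle.exp y := neg_injective hxy
    have hpi := Real.pi_gt_three
    have h1 := Circle.arg_exp (x := x) (by linarith [hx.1]) (by linarith [hx.2])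
    have h2 := Circle.arg_exp (x := y) (by linarith [hy.1]) (by linarith [hy.2])
    rw [← h1, ← h2, h]
  obtain ⟨c, ⟨θ, hθ, rfl⟩, hc⟩ := hinf.exists_notMem_finite hfin
  let x : selfAdjoint (Matrix (Fin d) (Fin d) ℂ) := (-θ) • 1
  have hx : ((selfAdjoint.expUnitary x : unitary (Matrix (Fin d) (Fin d) ℂ)) :
      Matrix (Fin d) (Fin d) ℂ) = ((Circle.exp θ)⁻¹ : ℂ) • 1 := by
    rw [selfAdjoint.expUnitary_coe]
    have : (Complex.I • (x : Matrix (Fin d) (Fin d) ℂ))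
        = Matrix.diagonal (fun _ => Complex.I * (-θ : ℂ)) := by
      ext i j
      by_cases hij : i = j <;> simp [x, hij, Matrix.one_apply, Matrix.diagonal]
    rw [this, Matrix.exp_diagonal]
    ext i j
    by_cases hij : i = j
    · subst hij
      simp [Pi.coe_exp, ← Complex.exp_eq_exp_ℂ, Circle.coe_exp, ← Complex.exp_neg, mul_comm]
    · simp [hij, Matrix.one_apply]
  have j1 : Joined 1 (selfAdjoint.expUnitary x) := selfAdjoint.joined_one_expUnitary x
  have j2 : Joined 1 (selfAdjoint.expUnitary x * u) := by
    refine Unitary.joined _ _ ?_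
    rw [OneMemClass.coe_one, Unitary.norm_sub_one_lt_two_iff (SetLike.coe_mem _)]
    rw [Submonoid.coe_mul, hx, smul_mul_assoc, one_mul]
    intro hmem
    apply hc
    have hne : ((Circle.exp θ)⁻¹ : ℂ) ≠ 0 := inv_ne_zero (Circle.coe_ne_zero _)
    rw [← spectrum.smul_mem_smul_iff (r := Units.mk0 _ hne)]
    convert hmem using 1
    · rfl
    change ((Circle.exp θ : ℂ))⁻¹ * -(Circle.exp θ : ℂ) = -1
    rw [mul_neg, inv_mul_cancel₀ (Circle.coe_ne_zero _)]
  have j3 := j1.inv.mul j2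
  simpa using j3

instance unitary_preconn (d : ℕ) : PreconnectedSpace (unitary (Matrix (Fin d) (Fin d) ℂ)) := by
  haveI : PathConnectedSpace (unitary (Matrix (Fin d) (Fin d) ℂ)) :=
    ⟨⟨1⟩, fun u v => (joined_one d u).symm.trans (joined_one d v)⟩
  infer_instance

/-- The basic trace functional. -/
noncomputable def gfun {d : ℕ} (A S : Matrix (Fin d) (Fin d) ℂ) (z : ℝ)
    (W : Matrix (Fin d) (Fin d) ℂ) : ℝ := (mpow (S * (W * A * star W) * S) z).trace.re

lemma gfun_cont {d : ℕ} {A S : Matrix (Fin d) (Fin d) ℂ} (hA : A.PosDef) (hS : S.PosDef) (z : ℝ) :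
    ContinuousOn (gfun A S z) {U | U ∈ Matrix.unitaryGroup (Fin d) ℂ} := by
  have h0 : Continuous (fun W : Matrix (Fin d) (Fin d) ℂ => S * (W * A * star W) * S) := by
    have e1 : Continuous (fun W : Matrix (Fin d) (Fin d) ℂ => W * A) :=
      continuous_id.mul continuous_const
    have e2 : Continuous (fun W : Matrix (Fin d) (Fin d) ℂ => W * A * star W) :=
      e1.mul continuous_star
    exact (continuous_const.mul e2).mul continuous_const
  have hm : Set.MapsTo (fun W : Matrix (Fin d) (Fin d) ℂ => S * (W * A * star W) * S)
      {U | U ∈ Matrix.unitaryGroup (Fin d) ℂ} {A | A.PosDef} :=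
    fun W hW => posDef_sandwich hS (posDef_unitary hW hA)
  have h2 := ContinuousOn.comp (mpow_continuousOn (d := d) z) h0.continuousOn hm
  have h3 : Continuous (fun M : Matrix (Fin d) (Fin d) ℂ => M.trace.re) :=
    (trL d).continuous
  exact h3.comp_continuousOn h2

lemma gfun_crit {d : ℕ} {V T : Matrix (Fin d) (Fin d) ℂ}
    (hV : V ∈ Matrix.unitaryGroup (Fin d) ℂ) (hT : T ∈ Matrix.unitaryGroup (Fin d) ℂ)
    {a b : Fin d → ℝ} (ha : ∀ i, 0 < a i) (hb : ∀ i, 0 < b i) {z : ℝ} (hz : z ∈ Set.Ioo (0:ℝ) 1)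
    {W0 : Matrix (Fin d) (Fin d) ℂ} (hW0 : W0 ∈ Matrix.unitaryGroup (Fin d) ℂ)
    (h : IsMinOn (gfun (V * dg a * star V) (T * dg b * star T) z)
          {U | U ∈ Matrix.unitaryGroup (Fin d) ℂ} W0 ∨
      IsMaxOn (gfun (V * dg a * star V) (T * dg b * star T) z)
          {U | U ∈ Matrix.unitaryGroup (Fin d) ℂ} W0) :
    ∃ D ∈ doublyStochastic ℝ (Fin d), gfun (V * dg a * star V) (T * dg b * star T) z W0
      = ∑ i, ∑ j, a i ^ z * b j ^ (2 * z) * D i j := by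
  have hA := posDef_conj_dg hV a ha
  have hS := posDef_conj_dg hT b hb
  set S := T * dg b * star T
  have hWV : W0 * V ∈ Matrix.unitaryGroup (Fin d) ℂ := mul_mem hW0 hV
  have e : W0 * (V * dg a * star V) * star W0 = (W0 * V) * dg a * star (W0 * V) := by
    simp only [star_mul, mul_assoc]
  have hA0 := posDef_unitary hW0 hA
  have key : ∀ W, S * (W * (W0 * (V * dg a * star V) * star W0) * star W) * S
      = S * ((W * W0) * (V * dg a * star V) * star (W * W0)) * S := by
    intro W; simp only [star_mul, mul_assoc]
  have hcomm : Commute (W0 * (V * dg a * star V) * star W0) S := by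
    refine crit_commute hA0 hS hz ?_
    refine h.imp ?_ ?_
    · intro h W hW
      rw [key]
      exact h (mul_mem hW hW0 : W * W0 ∈ Matrix.unitaryGroup (Fin d) ℂ)
    · intro h W hW
      rw [key]
      exact h (mul_mem hW hW0 : W * W0 ∈ Matrix.unitaryGroup (Fin d) ℂ)
  have hQ : star (W0 * V) * T ∈ Matrix.unitaryGroup (Fin d) ℂ :=
    mul_mem (Unitary.star_mem hWV) hT
  refine ⟨_, ds_mem hQ, ?_⟩
  rw [gfun, crit_value hA0 hS hcomm, e, mpow_conj hWV, mpow_conj hT, trace_formula]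
  rfl

lemma gfun_attain {d : ℕ} {V T : Matrix (Fin d) (Fin d) ℂ}
    (hV : V ∈ Matrix.unitaryGroup (Fin d) ℂ) (hT : T ∈ Matrix.unitaryGroup (Fin d) ℂ)
    {a b : Fin d → ℝ} (ha : ∀ i, 0 < a i) (hb : ∀ i, 0 < b i) (z : ℝ)
    (s r : Equiv.Perm (Fin d)) :
    ∃ W ∈ Matrix.unitaryGroup (Fin d) ℂ, gfun (V * dg a * star V) (T * dg b * star T) z W
      = ∑ i, a (s i) ^ z * b (r i) ^ (2 * z) := by
  have perm : ∀ {V : Matrix (Fin d) (Fin d) ℂ} (hV : V ∈ Matrix.unitaryGroup (Fin d) ℂ)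
      (s : Equiv.Perm (Fin d)), ∃ V' ∈ Matrix.unitaryGroup (Fin d) ℂ, ∀ a : Fin d → ℝ,
        V * dg a * star V = V' * dg (fun i => a (s i)) * star V' := by
    intro V hV s
    have hst : star (V.submatrix id s) = (star V).submatrix s id := rfl
    refine ⟨V.submatrix id s, ?_, fun a => ?_⟩
    · rw [Matrix.mem_unitaryGroup_iff, hst, Matrix.submatrix_mul_equiv, hV.2]
      simp
    · have : dg (fun i => a (s i)) = (dg a).submatrix s s := by
        simp only [dg, Matrix.submatrix_diagonal_equiv]; rfl
      rw [hst, this, Matrix.submatrix_mul_equiv, Matrix.submatrix_mul_equiv, Matrix.submatrix_id_id]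
  obtain ⟨V', hV', e1⟩ := perm hV s
  obtain ⟨T', hT', e2⟩ := perm hT r
  rw [e1, e2]
  refine ⟨T' * star V', mul_mem hT' (Unitary.star_mem hV'), ?_⟩
  have e3 : (T' * star V') * (V' * dg (fun i => a (s i)) * star V') * star (T' * star V')
      = T' * dg (fun i => a (s i)) * star T' := by
    calc _ = T' * (star V' * V') * dg (fun i => a (s i)) * (star V' * V') * star T' := by
          simp only [star_mul, star_star, mul_assoc]
      _ = _ := by rw [hV'.1, mul_one, mul_one]
  rw [gfun, e3, conj_mul_conj hT', conj_mul_conj hT', dg_mul, dg_mul, mpow_conj hT', trace_conj hT',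
    dg, Matrix.trace_diagonal, Complex.re_sum]
  refine Finset.sum_congr rfl fun i _ => ?_
  rw [Complex.ofReal_re, Real.mul_rpow (mul_pos (hb _) (ha _)).le (hb _).le,
    Real.mul_rpow (hb _).le (ha _).le, two_mul, Real.rpow_add (hb _)]
  ring

lemma Faz_eq {d : ℕ} {ρ σ U : Matrix (Fin d) (Fin d) ℂ} (hρ : ρ.PosDef) (hσ : σ.PosDef)
    (hU : U ∈ Matrix.unitaryGroup (Fin d) ℂ) (α z : ℝ) :
    Faz ρ (U * σ * star U) α z
      = gfun (mpow ρ (α / z)) (mpow σ ((1 - α) / (2 * z))) z (star U) ^ (1 / α) := by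
  have hA := mpow_posDef hρ (α / z)
  have hS := mpow_posDef hσ ((1 - α) / (2 * z))
  rw [Faz, mpow_unitary hσ.1 hU, gfun, star_star]
  set A := mpow ρ (α / z)
  set S := mpow σ ((1 - α) / (2 * z))
  have e : U * S * star U * A * (U * S * star U) = U * (S * (star U * A * U) * S) * star U := by
    simp only [mul_assoc]
  have hp := posDef_sandwich hS (posDef_unitary (Unitary.star_mem hU) hA)
  rw [star_star] at hp
  rw [e, mpow_unitary hp.1 hU, trace_conj hU]

lemma gfun_range {d : ℕ} {V T : Matrix (Fin d) (Fin d) ℂ}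
    (hV : V ∈ Matrix.unitaryGroup (Fin d) ℂ) (hT : T ∈ Matrix.unitaryGroup (Fin d) ℂ)
    {a b : Fin d → ℝ} (ha : ∀ i, 0 < a i) (hb : ∀ i, 0 < b i) {z : ℝ} (hz : z ∈ Set.Ioo (0:ℝ) 1)
    (s r r' : Equiv.Perm (Fin d))
    (h1 : Antivary ((fun i => a i ^ z) ∘ s) ((fun i => b i ^ (2 * z)) ∘ r))
    (h2 : Monovary ((fun i => a i ^ z) ∘ s) ((fun i => b i ^ (2 * z)) ∘ r'))
    {W : Matrix (Fin d) (Fin d) ℂ} (hW : W ∈ Matrix.unitaryGroup (Fin d) ℂ) :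
    ∑ i, a (s i) ^ z * b (r i) ^ (2 * z) ≤ gfun (V * dg a * star V) (T * dg b * star T) z W ∧
    gfun (V * dg a * star V) (T * dg b * star T) z W ≤ ∑ i, a (s i) ^ z * b (r' i) ^ (2 * z) := by
  have hc := gfun_cont (posDef_conj_dg hV a ha) (posDef_conj_dg hT b hb) z
  constructor
  · obtain ⟨W0, hW0, hmin⟩ := (isCompact_unitaryGroup d).exists_isMinOn ⟨W, hW⟩ hc
    obtain ⟨D, hD, hval⟩ := gfun_crit hV hT ha hb hz hW0 (Or.inl hmin)
    have := ds_lower hD _ _ s r h1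
    refine this.trans (hval.symm.le.trans (hmin hW))
  · obtain ⟨W0, hW0, hmax⟩ := (isCompact_unitaryGroup d).exists_isMaxOn ⟨W, hW⟩ hc
    obtain ⟨D, hD, hval⟩ := gfun_crit hV hT ha hb hz hW0 (Or.inr hmax)
    have := ds_upper hD _ _ s r' h2
    refine (hmax hW).trans (hval.le.trans this)

lemma sortDown_eq {d : ℕ} (p : Fin d → ℝ) (i : Fin d) :
    sortDown p i = p ((Fin.revPerm.trans (Tuple.sort p)) i) := rfl

lemma main_aux {d : ℕ} (ρ σ : Matrix (Fin d) (Fin d) ℂ)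
    (hρ : ρ.PosDef) (hσ : σ.PosDef)
    (α z : ℝ) (hα : α ∈ Set.Ioo (0 : ℝ) 1) (hz : z ∈ Set.Ioo (0 : ℝ) 1) :
    {x : ℝ | ∃ U ∈ Matrix.unitaryGroup (Fin d) ℂ, x = Faz ρ (U * σ * star U) α z}
      = Set.Icc (FazC (eigDown hρ.1) (eigUp hσ.1) α)
          (FazC (eigDown hρ.1) (eigDown hσ.1) α) := by
  have hV := hρ.1.eigenvectorUnitary.2
  have hT := hσ.1.eigenvectorUnitary.2
  have eρ := spec_herm hρ.1
  have eσ := spec_herm hσ.1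
  have hp := hρ.eigenvalues_pos
  have hq := hσ.eigenvalues_pos
  have hAA := mpow_posDef hρ (α / z)
  have hSS := mpow_posDef hσ ((1 - α) / (2 * z))
  have hF : ∀ U ∈ Matrix.unitaryGroup (Fin d) ℂ, Faz ρ (U * σ * star U) α z
      = gfun (mpow ρ (α / z)) (mpow σ ((1 - α) / (2 * z))) z (star U) ^ (1 / α) :=
    fun U hU => Faz_eq hρ hσ hU α z
  rw [eigDown, eigDown, eigUp]
  set p := hρ.1.eigenvalues
  set q := hσ.1.eigenvalues
  set V := hρ.1.eigenvectorUnitary.1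
  set T := hσ.1.eigenvectorUnitary.1
  have hz0 := hz.1
  have hα0 := hα.1
  have hα1 := hα.2
  set A := mpow ρ (α / z) with hAdef
  set S := mpow σ ((1 - α) / (2 * z)) with hSdef
  have hA' : A = V * dg (fun i => p i ^ (α / z)) * star V := by
    rw [hAdef]; conv_lhs => rw [eρ]
    exact mpow_conj hV _ _
  have hS' : S = T * dg (fun i => q i ^ ((1 - α) / (2 * z))) * star T := by
    rw [hSdef]; conv_lhs => rw [eσ]
    exact mpow_conj hT _ _
  have ha : ∀ i, 0 < p i ^ (α / z) := fun i => Real.rpow_pos_of_pos (hp i) _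
  have hb : ∀ i, 0 < q i ^ ((1 - α) / (2 * z)) := fun i => Real.rpow_pos_of_pos (hq i) _
  have ea : ∀ i, (p i ^ (α / z)) ^ z = p i ^ α := fun i => by
    rw [← Real.rpow_mul (hp i).le, div_mul_cancel₀ _ hz0.ne']
  have eb : ∀ i, (q i ^ ((1 - α) / (2 * z))) ^ (2 * z) = q i ^ (1 - α) := fun i => by
    rw [← Real.rpow_mul (hq i).le, div_mul_cancel₀ _ (by positivity)]
  let s : Equiv.Perm (Fin d) := Fin.revPerm.trans (Tuple.sort p)
  let r : Equiv.Perm (Fin d) := Tuple.sort q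
  let r' : Equiv.Perm (Fin d) := Fin.revPerm.trans (Tuple.sort q)
  have ms : Antitone ((fun i => (p i ^ (α / z)) ^ z) ∘ s) := by
    intro i j hij
    simp only [Function.comp_apply, ea]
    exact Real.rpow_le_rpow (hp _).le (Tuple.monotone_sort p (Fin.rev_le_rev.2 hij)) hα0.le
  have mr : Monotone ((fun i => (q i ^ ((1 - α) / (2 * z))) ^ (2 * z)) ∘ r) := by
    intro i j hij
    simp only [Function.comp_apply, eb]
    exact Real.rpow_le_rpow (hq _).le (Tuple.monotone_sort q hij) (by linarith)
  have mr' : Antitone ((fun i => (q i ^ ((1 - α) / (2 * z))) ^ (2 * z)) ∘ r') := by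
    intro i j hij
    simp only [Function.comp_apply, eb]
    exact Real.rpow_le_rpow (hq _).le (Tuple.monotone_sort q (Fin.rev_le_rev.2 hij)) (by linarith)
  have hrange := fun {W} hW => gfun_range hV hT ha hb hz s r r' (ms.antivary mr) (ms.monovary mr')
    (W := W) hW
  obtain ⟨W1, hW1, v1⟩ := gfun_attain hV hT ha hb z s r
  obtain ⟨W2, hW2, v2⟩ := gfun_attain hV hT ha hb z s r'
  simp only [ea, eb] at hrange v1 v2
  rw [← hA', ← hS'] at hrange v1 v2
  have hL : FazC (sortDown p) (sortUp q) α = (∑ i, p (s i) ^ α * q (r i) ^ (1 - α)) ^ (1 / α) := rfl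
  have hR : FazC (sortDown p) (sortDown q) α = (∑ i, p (s i) ^ α * q (r' i) ^ (1 - α)) ^ (1 / α) :=
    rfl
  have hLnn : 0 ≤ ∑ i, p (s i) ^ α * q (r i) ^ (1 - α) :=
    Finset.sum_nonneg fun i _ => mul_nonneg (Real.rpow_nonneg (hp _).le _)
      (Real.rpow_nonneg (hq _).le _)
  have hinv : 0 ≤ 1 / α := by positivity
  rw [hL, hR]
  ext x
  constructor
  · rintro ⟨U, hU, rfl⟩
    rw [hF U hU]
    obtain ⟨b1, b2⟩ := hrange (Unitary.star_mem hU)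
    exact ⟨Real.rpow_le_rpow hLnn b1 hinv, Real.rpow_le_rpow (hLnn.trans b1) b2 hinv⟩
  · rintro ⟨x1, x2⟩
    have hcont : Continuous fun W : unitary (Matrix (Fin d) (Fin d) ℂ) =>
        gfun A S z W ^ (1 / α) := by
      have h := (gfun_cont hAA hSS z).restrict
      exact Continuous.rpow_const h (fun _ => Or.inr hinv)
    obtain ⟨W, hW⟩ := mem_range_of_exists_le_of_exists_ge hcont (c := x)
      ⟨⟨W1, hW1⟩, by simpa only [v1] using x1⟩ ⟨⟨W2, hW2⟩, by simpa only [v2] using x2⟩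
    refine ⟨star (W : Matrix (Fin d) (Fin d) ℂ), Unitary.star_mem W.2, ?_⟩
    rw [hF _ (Unitary.star_mem W.2), star_star]
    exact hW.symm

end Aux

/-- for positive definite density matrices `ρ, σ` and `α, z ∈ (0,1)`,
the set of values `F_{α,z}(ρ, UσU*)` over unitaries `U` is exactly
`[F_α^C(λ↓(ρ),λ↑(σ)), F_α^C(λ↓(ρ),λ↓(σ))]`. -/
theorem stmt_6 {d : ℕ} (ρ σ : Matrix (Fin d) (Fin d) ℂ)
    (hρ : ρ.PosDef) (hσ : σ.PosDef) (hρ1 : ρ.trace = 1) (hσ1 : σ.trace = 1)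
    (α z : ℝ) (hα : α ∈ Set.Ioo (0 : ℝ) 1) (hz : z ∈ Set.Ioo (0 : ℝ) 1) :
    {x : ℝ | ∃ U ∈ Matrix.unitaryGroup (Fin d) ℂ, x = Faz ρ (U * σ * star U) α z}
      = Set.Icc (FazC (eigDown hρ.1) (eigUp hσ.1) α)
          (FazC (eigDown hρ.1) (eigDown hσ.1) α) := by
  exact main_aux ρ σ hρ hσ α z hα hz
end
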